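/- arXiv:1303.1284 — 12 statements merged into one kernel-verified Lean document; each statement's English description precedes it below -/
import Mathlib

section
/- Let Z¹ and Z² be independent generators on ℝ^d (defined on a common probability space), and suppose Z² generates the sup-norm, i.e. E(max_{1≤i≤d} |x_i| Z²_i) = max_{1≤i≤d} |x_i| for all x ∈ ℝ^d. Then for all x ∈ ℝ^d, E(max_{1≤i≤d} |x_i| Z¹_i Z²_i) = E(max_{1≤i≤d} |x_i| Z¹_i); in other words, the sup-norm is an identity element for the multiplication of D-norms. -/
open MeasureTheory ProbabilityTheory

/-- The sup-norm is an identity element for the multiplication of D-norms. -/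
theorem supNorm_identity_for_dNorm_mul {d : ℕ} (hd : 0 < d) {Ω : Type*} [MeasurableSpace Ω]
    (μ : Measure Ω) [IsProbabilityMeasure μ]
    (Z₁ Z₂ : Ω → Fin d → ℝ)
    (hZ₁m : Measurable Z₁) (hZ₂m : Measurable Z₂)
    (hZ₁nn : ∀ i, ∀ᵐ ω ∂μ, 0 ≤ Z₁ ω i)
    (hZ₂nn : ∀ i, ∀ᵐ ω ∂μ, 0 ≤ Z₂ ω i)
    (hZ₁int : ∀ i, Integrable (fun ω => Z₁ ω i) μ)
    (hZ₂int : ∀ i, Integrable (fun ω => Z₂ ω i) μ)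
    (hZ₁mean : ∀ i, ∫ ω, Z₁ ω i ∂μ = 1)
    (hZ₂mean : ∀ i, ∫ ω, Z₂ ω i ∂μ = 1)
    (hindep : IndepFun Z₁ Z₂ μ)
    (hZ₂sup : ∀ x : Fin d → ℝ, (∫ ω, ⨆ i, |x i| * Z₂ ω i ∂μ) = ⨆ i, |x i|) :
    ∀ x : Fin d → ℝ,
      (∫ ω, ⨆ i, |x i| * (Z₁ ω i * Z₂ ω i) ∂μ) = ∫ ω, ⨆ i, |x i| * Z₁ ω i ∂μ := by
  intro x
  have : Nonempty (Fin d) := ⟨⟨0, hd⟩⟩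
  let k : Fin d := ⟨0, hd⟩
  have h1 : (∫ ω, ⨆ i, Z₂ ω i ∂μ) = 1 := by
    have h := hZ₂sup (fun _ => 1)
    simpa using h
  have hSint : Integrable (fun ω => ⨆ i, Z₂ ω i) μ := by
    by_contra hn
    rw [integral_undef hn] at h1
    exact zero_ne_one h1
  have heq : ∀ i, ∀ᵐ ω ∂μ, Z₂ ω i = ⨆ j, Z₂ ω j := by
    intro i
    have hle : (fun ω => Z₂ ω i) ≤ᵐ[μ] (fun ω => ⨆ j, Z₂ ω j) :=
      Filter.Eventually.of_forall fun ω => le_ciSup (f := fun j => Z₂ ω j) (Set.finite_range _).bddAbove i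
    exact (integral_eq_iff_of_ae_le (hZ₂int i) hSint hle).1 ((hZ₂mean i).trans h1.symm)
  have hall : ∀ᵐ ω ∂μ, ∀ i, Z₂ ω i = ⨆ j, Z₂ ω j := ae_all_iff.2 heq
  have hae : (fun ω => ⨆ i, |x i| * (Z₁ ω i * Z₂ ω i)) =ᵐ[μ]
      fun ω => (⨆ i, |x i| * Z₁ ω i) * Z₂ ω k := by
    filter_upwards [hall, hZ₂nn k] with ω hω h0
    rw [Real.iSup_mul_of_nonneg h0]
    congr 1
    ext i
    rw [hω i, hω k, mul_assoc]
  rw [integral_congr_ae hae]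
  have hf : Measurable (fun z : Fin d → ℝ => ⨆ i, |x i| * z i) :=
    Measurable.iSup fun i => (measurable_pi_apply i).const_mul _
  have hind : IndepFun (fun ω => ⨆ i, |x i| * Z₁ ω i) (fun ω => Z₂ ω k) μ :=
    hindep.comp hf (measurable_pi_apply k)
  rw [hind.integral_fun_mul_eq_mul_integral (hf.comp hZ₁m).aestronglyMeasurable
    ((measurable_pi_apply k).comp hZ₂m).aestronglyMeasurable, hZ₂mean k, mul_one]
end

section
/- Let Z¹ and Z² be independent generators on ℝ^d (defined on a common probability space), and suppose Z² generates the L¹-norm, i.e. E(max_{1≤i≤d} |x_i| Z²_i) = Σ_{i=1}^d |x_i| for all x ∈ ℝ^d. Then for all x ∈ ℝ^d, E(max_{1≤i≤d} |x_i| Z¹_i Z²_i) = Σ_{i=1}^d |x_i|; in other words, multiplication by the independence norm ‖·‖₁ always yields ‖·‖₁. -/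
open MeasureTheory ProbabilityTheory

lemma aux_sup_le_sum {d : ℕ} (hd : 0 < d) (z : Fin d → ℝ) (hz : ∀ i, 0 ≤ z i) :
    (⨆ i, z i) ≤ ∑ i, z i := by
  haveI : Nonempty (Fin d) := ⟨⟨0, hd⟩⟩
  exact ciSup_le fun i => Finset.single_le_sum (fun j _ => hz j) (Finset.mem_univ i)

lemma aux_sup_eq {d : ℕ} (hd : 0 < d) (z a : Fin d → ℝ) (hz : ∀ i, 0 ≤ z i) (ha : ∀ i, 0 ≤ a i)
    (h : (⨆ i, z i) = ∑ i, z i) : (⨆ i, a i * z i) = ∑ i, a i * z i := by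
  haveI : Nonempty (Fin d) := ⟨⟨0, hd⟩⟩
  obtain ⟨k, hk⟩ := exists_eq_ciSup_of_finite (f := z)
  have h0 : ∀ j, j ≠ k → z j = 0 := by
    have h1 := Finset.add_sum_erase Finset.univ z (Finset.mem_univ k)
    have h2 : ∑ i ∈ Finset.univ.erase k, z i = 0 := by linarith
    rw [Finset.sum_eq_zero_iff_of_nonneg (fun i _ => hz i)] at h2
    intro j hj
    exact h2 j (by simp [hj])
  have hs : ∑ i, a i * z i = a k * z k :=
    Finset.sum_eq_single k (fun j _ hj => by simp [h0 j hj]) (by simp)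
  apply le_antisymm
  · exact aux_sup_le_sum hd _ fun i => mul_nonneg (ha i) (hz i)
  · rw [hs]
    exact le_ciSup (f := fun i => a i * z i) (Set.finite_range _).bddAbove k

/-- Multiplication by the independence norm always yields the independence norm. -/
theorem l1Norm_absorbing_for_dNorm_mul {d : ℕ} (hd : 0 < d) {Ω : Type*} [MeasurableSpace Ω]
    (μ : Measure Ω) [IsProbabilityMeasure μ]
    (Z₁ Z₂ : Ω → Fin d → ℝ)
    (hZ₁m : Measurable Z₁) (hZ₂m : Measurable Z₂)
    (hZ₁nn : ∀ i, ∀ᵐ ω ∂μ, 0 ≤ Z₁ ω i)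
    (hZ₂nn : ∀ i, ∀ᵐ ω ∂μ, 0 ≤ Z₂ ω i)
    (hZ₁int : ∀ i, Integrable (fun ω => Z₁ ω i) μ)
    (hZ₂int : ∀ i, Integrable (fun ω => Z₂ ω i) μ)
    (hZ₁mean : ∀ i, ∫ ω, Z₁ ω i ∂μ = 1)
    (hZ₂mean : ∀ i, ∫ ω, Z₂ ω i ∂μ = 1)
    (hindep : IndepFun Z₁ Z₂ μ)
    (hZ₂l1 : ∀ x : Fin d → ℝ, (∫ ω, ⨆ i, |x i| * Z₂ ω i ∂μ) = ∑ i, |x i|) :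
    ∀ x : Fin d → ℝ,
      (∫ ω, ⨆ i, |x i| * (Z₁ ω i * Z₂ ω i) ∂μ) = ∑ i, |x i| := by
  intro x
  have h1 : (∫ ω, ⨆ i, Z₂ ω i ∂μ) = d := by simpa using hZ₂l1 (fun _ => 1)
  have hne : (∫ ω, ⨆ i, Z₂ ω i ∂μ) ≠ 0 := by
    rw [h1]; exact_mod_cast hd.ne'
  have hint : Integrable (fun ω => ⨆ i, Z₂ ω i) μ := by
    by_contra hc
    exact hne (integral_undef hc)
  have hsint : Integrable (fun ω => ∑ i, Z₂ ω i) μ := integrable_finsetSum _ fun i _ => hZ₂int i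
  have hs : (∫ ω, ∑ i, Z₂ ω i ∂μ) = d := by
    rw [integral_finsetSum _ fun i _ => hZ₂int i]; simp [hZ₂mean]
  have hnn1 := ae_all_iff.2 hZ₁nn
  have hnn2 := ae_all_iff.2 hZ₂nn
  have hle : (fun ω => ⨆ i, Z₂ ω i) ≤ᵐ[μ] fun ω => ∑ i, Z₂ ω i := by
    filter_upwards [hnn2] with ω hω using aux_sup_le_sum hd _ hω
  have heq := (integral_eq_iff_of_ae_le hint hsint hle).1 (h1.trans hs.symm)
  have hind : ∀ i, IndepFun (fun ω => Z₁ ω i) (fun ω => Z₂ ω i) μ := fun i =>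
    hindep.comp (measurable_pi_apply i) (measurable_pi_apply i)
  have hpi : ∀ i, Integrable (fun ω => Z₁ ω i * Z₂ ω i) μ := fun i =>
    (hind i).integrable_mul (hZ₁int i) (hZ₂int i)
  have hpe : ∀ i, ∫ ω, Z₁ ω i * Z₂ ω i ∂μ = 1 := fun i => by
    rw [(hind i).integral_fun_mul_eq_mul_integral (hZ₁int i).1 (hZ₂int i).1,
      hZ₁mean, hZ₂mean, one_mul]
  have hfin : (fun ω => ⨆ i, |x i| * (Z₁ ω i * Z₂ ω i)) =ᵐ[μ]
      fun ω => ∑ i, |x i| * (Z₁ ω i * Z₂ ω i) := by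
    filter_upwards [hnn1, hnn2, heq] with ω a b c
    simpa [mul_assoc] using aux_sup_eq hd (Z₂ ω) (fun i => |x i| * Z₁ ω i) b
      (fun i => mul_nonneg (abs_nonneg _) (a i)) c
  rw [integral_congr_ae hfin, integral_finsetSum _ fun i _ => (hpi i).const_mul _]
  simp [integral_const_mul, hpe]
end

section
/- The product D-norm does not depend on the particular choice of generators: if Z¹, Z² are independent generators on ℝ^d and Z̃¹, Z̃² are independent generators on ℝ^d (possibly on a different probability space) such that E(max_{1≤i≤d} |x_i| Z¹_i) = E(max_{1≤i≤d} |x_i| Z̃¹_i) for all x ∈ ℝ^d and E(max_{1≤i≤d} |x_i| Z²_i) = E(max_{1≤i≤d} |x_i| Z̃²_i) for all x ∈ ℝ^d, then E(max_{1≤i≤d} |x_i| Z¹_i Z²_i) = E(max_{1≤i≤d} |x_i| Z̃¹_i Z̃²_i) for all x ∈ ℝ^d. -/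
open MeasureTheory ProbabilityTheory

theorem dn_meas {d : ℕ} (x : Fin d → ℝ) : Measurable (fun p : (Fin d → ℝ) × (Fin d → ℝ) =>
    ⨆ i, |x i| * (p.1 i * p.2 i)) := by
  refine Measurable.iSup (fun i => ?_)
  fun_prop

theorem dn_meas_one {d : ℕ} (x : Fin d → ℝ) : Measurable (fun p : (Fin d → ℝ) =>
    ⨆ i, |x i| * p i) := by
  refine Measurable.iSup (fun i => ?_)
  fun_prop

theorem dn_integrable {d : ℕ} (hd : 0 < d) (P R : Measure (Fin d → ℝ)) [IsProbabilityMeasure P]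
    [IsProbabilityMeasure R] (hP : ∀ i, Integrable (fun p => p i) P)
    (hR : ∀ i, Integrable (fun p => p i) R) (x : Fin d → ℝ) :
    Integrable (fun p : (Fin d → ℝ) × (Fin d → ℝ) => ⨆ i, |x i| * (p.1 i * p.2 i))
      (P.prod R) := by
  have : Nonempty (Fin d) := ⟨⟨0, hd⟩⟩
  have h : Integrable (fun p : (Fin d → ℝ) × (Fin d → ℝ) => ∑ i, |(|x i| * (p.1 i * p.2 i))|)
      (P.prod R) := by
    refine integrable_finsetSum _ (fun i _ => ?_)
    exact (((hP i).mul_prod (hR i)).const_mul |x i|).abs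
  refine h.mono' (dn_meas x).aestronglyMeasurable (Filter.Eventually.of_forall fun p => ?_)
  obtain ⟨j, hj⟩ := exists_eq_ciSup_of_finite (f := fun i => |x i| * (p.1 i * p.2 i))
  rw [← hj, Real.norm_eq_abs]
  exact Finset.single_le_sum (f := fun i => |(|x i| * (p.1 i * p.2 i))|)
    (fun i _ => abs_nonneg _) (Finset.mem_univ j)

theorem dn_swap_one {d : ℕ} (hd : 0 < d) (P Q R : Measure (Fin d → ℝ)) [IsProbabilityMeasure P]
    [IsProbabilityMeasure Q] [IsProbabilityMeasure R]
    (hP : ∀ i, Integrable (fun p => p i) P) (hQ : ∀ i, Integrable (fun p => p i) Q)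
    (hR : ∀ i, Integrable (fun p => p i) R) (hRn : ∀ i, ∀ᵐ p ∂ (R), 0 ≤ p i)
    (h : ∀ x : Fin d → ℝ, (∫ p, ⨆ i, |x i| * p i ∂P) = ∫ p, ⨆ i, |x i| * p i ∂Q)
    (x : Fin d → ℝ) :
    (∫ p, ⨆ i, |x i| * (p.1 i * p.2 i) ∂(P.prod R)) =
      ∫ p, ⨆ i, |x i| * (p.1 i * p.2 i) ∂(Q.prod R) := by
  rw [integral_prod_symm _ (dn_integrable hd P R hP hR x),
    integral_prod_symm _ (dn_integrable hd Q R hQ hR x)]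
  refine integral_congr_ae ?_
  filter_upwards [ae_all_iff.2 hRn] with q hq
  have e : ∀ p : Fin d → ℝ, (⨆ i, |x i| * (p i * q i)) = ⨆ i, |x i * q i| * p i := by
    intro p
    congr 1
    funext i
    rw [abs_mul, abs_of_nonneg (hq i)]
    ring
  simp only [e]
  exact h (fun i => x i * q i)

theorem dn_comm {d : ℕ} (P R : Measure (Fin d → ℝ)) [IsProbabilityMeasure P]
    [IsProbabilityMeasure R] (x : Fin d → ℝ) :
    (∫ p, ⨆ i, |x i| * (p.1 i * p.2 i) ∂(P.prod R)) =
      ∫ p, ⨆ i, |x i| * (p.1 i * p.2 i) ∂(R.prod P) := by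
  rw [← integral_prod_swap]
  simp only [Prod.fst_swap, Prod.snd_swap, mul_comm]

theorem dn_law {d : ℕ} {Ω : Type*} [MeasurableSpace Ω] (μ : Measure Ω) [IsProbabilityMeasure μ]
    (Z₁ Z₂ : Ω → Fin d → ℝ) (h1 : Measurable Z₁) (h2 : Measurable Z₂) (hi : IndepFun Z₁ Z₂ μ)
    (x : Fin d → ℝ) : (∫ ω, ⨆ i, |x i| * (Z₁ ω i * Z₂ ω i) ∂μ) =
      ∫ p, ⨆ i, |x i| * (p.1 i * p.2 i) ∂((μ.map Z₁).prod (μ.map Z₂)) := by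
  rw [← (indepFun_iff_map_prod_eq_prod_map_map h1.aemeasurable h2.aemeasurable).1 hi,
    integral_map (h1.prodMk h2).aemeasurable (dn_meas x).aestronglyMeasurable]

theorem dn_law_one {d : ℕ} {Ω : Type*} [MeasurableSpace Ω] (μ : Measure Ω)
    (Z : Ω → Fin d → ℝ) (h1 : Measurable Z)
    (x : Fin d → ℝ) : (∫ p, ⨆ i, |x i| * p i ∂(μ.map Z)) = ∫ ω, ⨆ i, |x i| * Z ω i ∂μ := by
  rw [integral_map h1.aemeasurable (dn_meas_one x).aestronglyMeasurable]

theorem dn_int {d : ℕ} {Ω : Type*} [MeasurableSpace Ω] (μ : Measure Ω)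
    (Z : Ω → Fin d → ℝ) (h1 : Measurable Z) (h : ∀ i, Integrable (fun ω => Z ω i) μ) (i : Fin d) :
    Integrable (fun p : Fin d → ℝ => p i) (μ.map Z) :=
  (integrable_map_measure (measurable_pi_apply i).aestronglyMeasurable h1.aemeasurable).2 (h i)

theorem dn_nn {d : ℕ} {Ω : Type*} [MeasurableSpace Ω] (μ : Measure Ω)
    (Z : Ω → Fin d → ℝ) (h1 : Measurable Z) (h : ∀ i, ∀ᵐ ω ∂μ, 0 ≤ Z ω i) (i : Fin d) :
    ∀ᵐ p ∂(μ.map Z), 0 ≤ p i :=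
  (ae_map_iff h1.aemeasurable
    (measurableSet_le measurable_const (measurable_pi_apply i))).2 (h i)

/-- The product D-norm does not depend on the particular choice of generators. -/
theorem dNorm_mul_wellDefined {d : ℕ} (hd : 0 < d)
    {Ω : Type*} [MeasurableSpace Ω] (μ : Measure Ω) [IsProbabilityMeasure μ]
    {Ω' : Type*} [MeasurableSpace Ω'] (ν : Measure Ω') [IsProbabilityMeasure ν]
    (Z₁ Z₂ : Ω → Fin d → ℝ) (W₁ W₂ : Ω' → Fin d → ℝ)
    (hZ₁m : Measurable Z₁) (hZ₂m : Measurable Z₂)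
    (hW₁m : Measurable W₁) (hW₂m : Measurable W₂)
    (hZ₁nn : ∀ i, ∀ᵐ ω ∂μ, 0 ≤ Z₁ ω i) (hZ₂nn : ∀ i, ∀ᵐ ω ∂μ, 0 ≤ Z₂ ω i)
    (hW₁nn : ∀ i, ∀ᵐ ω ∂ν, 0 ≤ W₁ ω i) (hW₂nn : ∀ i, ∀ᵐ ω ∂ν, 0 ≤ W₂ ω i)
    (hZ₁int : ∀ i, Integrable (fun ω => Z₁ ω i) μ)
    (hZ₂int : ∀ i, Integrable (fun ω => Z₂ ω i) μ)
    (hW₁int : ∀ i, Integrable (fun ω => W₁ ω i) ν)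
    (hW₂int : ∀ i, Integrable (fun ω => W₂ ω i) ν)
    (hZ₁mean : ∀ i, ∫ ω, Z₁ ω i ∂μ = 1) (hZ₂mean : ∀ i, ∫ ω, Z₂ ω i ∂μ = 1)
    (hW₁mean : ∀ i, ∫ ω, W₁ ω i ∂ν = 1) (hW₂mean : ∀ i, ∫ ω, W₂ ω i ∂ν = 1)
    (hindepZ : IndepFun Z₁ Z₂ μ) (hindepW : IndepFun W₁ W₂ ν)
    (hsame₁ : ∀ x : Fin d → ℝ,
      (∫ ω, ⨆ i, |x i| * Z₁ ω i ∂μ) = ∫ ω, ⨆ i, |x i| * W₁ ω i ∂ν)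
    (hsame₂ : ∀ x : Fin d → ℝ,
      (∫ ω, ⨆ i, |x i| * Z₂ ω i ∂μ) = ∫ ω, ⨆ i, |x i| * W₂ ω i ∂ν) :
    ∀ x : Fin d → ℝ,
      (∫ ω, ⨆ i, |x i| * (Z₁ ω i * Z₂ ω i) ∂μ) =
        ∫ ω, ⨆ i, |x i| * (W₁ ω i * W₂ ω i) ∂ν := by
  intro x
  have := Measure.isProbabilityMeasure_map (μ := μ) hZ₁m.aemeasurable
  have := Measure.isProbabilityMeasure_map (μ := μ) hZ₂m.aemeasurable
  have := Measure.isProbabilityMeasure_map (μ := ν) hW₁m.aemeasurable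
  have := Measure.isProbabilityMeasure_map (μ := ν) hW₂m.aemeasurable
  rw [dn_law μ Z₁ Z₂ hZ₁m hZ₂m hindepZ, dn_law ν W₁ W₂ hW₁m hW₂m hindepW,
    dn_swap_one hd (μ.map Z₁) (ν.map W₁) (μ.map Z₂) (dn_int μ Z₁ hZ₁m hZ₁int)
      (dn_int ν W₁ hW₁m hW₁int) (dn_int μ Z₂ hZ₂m hZ₂int) (dn_nn μ Z₂ hZ₂m hZ₂nn)
      (fun y => by rw [dn_law_one μ Z₁ hZ₁m, dn_law_one ν W₁ hW₁m]; exact hsame₁ y),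
    dn_comm,
    dn_swap_one hd (μ.map Z₂) (ν.map W₂) (ν.map W₁) (dn_int μ Z₂ hZ₂m hZ₂int)
      (dn_int ν W₂ hW₂m hW₂int) (dn_int ν W₁ hW₁m hW₁int) (dn_nn ν W₁ hW₁m hW₁nn)
      (fun y => by rw [dn_law_one μ Z₂ hZ₂m, dn_law_one ν W₂ hW₂m]; exact hsame₂ y),
    dn_comm]
end

section
/- Let d ≥ 3 and let U = (U_1, …, U_d) be a random vector with each U_i uniformly distributed on (0,1). Then 2 E(max_{1≤i≤d} U_i) ≤ 2 < d = ‖(1,…,1)‖₁; consequently there is no such U with E(max_{1≤i≤d} |x_i| · 2U_i) = Σ_{i=1}^d |x_i| for all x ∈ ℝ^d, i.e. the L¹-norm on ℝ^d with d ≥ 3 cannot be generated by twice a random vector following a copula. -/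
open MeasureTheory

/-- For `d ≥ 3`, the L¹-norm on `ℝ^d` cannot be generated by twice a random vector
following a copula. -/
theorem l1_not_generated_by_copula_high_dim {d : ℕ} (hd : 3 ≤ d)
    {Ω : Type*} [MeasurableSpace Ω] (μ : Measure Ω) [IsProbabilityMeasure μ]
    (U : Ω → Fin d → ℝ) (hUm : Measurable U)
    (hU : ∀ i, μ.map (fun ω => U ω i) = volume.restrict (Set.Ioo (0 : ℝ) 1)) :
    (2 * ∫ ω, ⨆ i, U ω i ∂μ) ≤ 2 ∧ (2 : ℝ) < d ∧
    ((d : ℝ) = ∑ _i : Fin d, |(1 : ℝ)|) ∧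
    ¬ ∀ x : Fin d → ℝ, (∫ ω, ⨆ i, |x i| * (2 * U ω i) ∂μ) = ∑ i, |x i| := by
  have h1 : ∀ᵐ ω ∂μ, ∀ i, U ω i ∈ Set.Ioo (0 : ℝ) 1 := by
    rw [ae_all_iff]
    intro i
    have hm : Measurable (fun ω => U ω i) := (measurable_pi_apply i).comp hUm
    have h : ∀ᵐ y ∂(μ.map (fun ω => U ω i)), y ∈ Set.Ioo (0 : ℝ) 1 := by
      rw [hU i]
      exact ae_restrict_mem measurableSet_Ioo
    exact ae_of_ae_map hm.aemeasurable h
  have hd' : (2 : ℝ) < d := by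
    have : (3 : ℝ) ≤ d := by exact_mod_cast hd
    linarith
  refine ⟨?_, hd', by simp, ?_⟩
  · have h := norm_integral_le_of_norm_le_const (μ := μ) (f := fun ω => ⨆ i, U ω i) (C := 1) (by
      filter_upwards [h1] with ω hω
      rw [Real.norm_eq_abs, abs_of_nonneg (Real.iSup_nonneg fun i => (hω i).1.le)]
      exact Real.iSup_le (fun i => (hω i).2.le) zero_le_one)
    have h2 := (le_abs_self _).trans h
    simp only [probReal_univ] at h2
    linarith
  · intro H
    have h := norm_integral_le_of_norm_le_const (μ := μ)
      (f := fun ω => ⨆ i, |(fun _ : Fin d => (1 : ℝ)) i| * (2 * U ω i)) (C := 2) (by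
      filter_upwards [h1] with ω hω
      rw [Real.norm_eq_abs, abs_of_nonneg (Real.iSup_nonneg fun i =>
        mul_nonneg (abs_nonneg _) (by linarith [(hω i).1]))]
      refine Real.iSup_le (fun i => ?_) zero_le_two
      have := (hω i).2
      simp only [abs_one]
      linarith)
    have h2 := (le_abs_self _).trans h
    rw [H] at h2
    simp at h2
    have : (d : ℝ) ≤ 2 := by exact_mod_cast h2
    linarith
end

section
/- Let X be a real random variable with |X| ≤ c almost surely for some constant c > 0 and E(X) = 0, and let Y be an independent copy of X (Y independent of X and identically distributed). If E(|X + Y|) = E(|X|), then either X = 0 almost surely, or there exists m ∈ (0, c] such that P(X = −m) = P(X = m) = 1/2. -/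
open MeasureTheory ProbabilityTheory

lemma core_law (ν : Measure ℝ) [IsProbabilityMeasure ν] (hi : Integrable (fun x => x) ν)
    (h0 : ∫ x, x ∂ν = 0)
    (heq : (∫ z, |z.1 + z.2| ∂(ν.prod ν)) = ∫ x, |x| ∂ν) :
    ∀ᵐ x ∂ν, ∫ y, |x + y| ∂ν = |x| := by
  have hint : Integrable (fun z : ℝ × ℝ => |z.1 + z.2|) (ν.prod ν) :=
    ((hi.comp_fst ν).add (hi.comp_snd ν)).abs
  rw [integral_prod _ hint] at heq
  have hle : (fun x => |x|) ≤ᵐ[ν] fun x => ∫ y, |x + y| ∂ν := by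
    refine Filter.Eventually.of_forall fun x => ?_
    have h1 : ∫ y, (x + y) ∂ν = x := by
      rw [integral_add (integrable_const _) hi, h0]; simp
    have h2 := abs_integral_le_integral_abs (f := fun y => x + y) (μ := ν)
    rw [h1] at h2
    exact h2
  have := (integral_eq_iff_of_ae_le hi.abs hint.integral_prod_left hle).1 heq.symm
  filter_upwards [this] with x hx using hx.symm

lemma core_law2 (ν : Measure ℝ) [IsProbabilityMeasure ν] (hi : Integrable (fun x => x) ν)
    (h0 : ∫ x, x ∂ν = 0)
    (heq : (∫ z, |z.1 + z.2| ∂(ν.prod ν)) = ∫ x, |x| ∂ν) :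
    ∀ᵐ x ∂ν, ∀ᵐ y ∂ν, (0 ≤ x → 0 ≤ x + y) ∧ (x ≤ 0 → x + y ≤ 0) := by
  filter_upwards [core_law ν hi h0 heq] with x hx
  have hxy : Integrable (fun y => x + y) ν := (integrable_const _).add hi
  have h1 : ∫ y, (x + y) ∂ν = x := by
    rw [integral_add (integrable_const _) hi, h0]; simp
  have hA : 0 ≤ x → ∀ᵐ y ∂ν, 0 ≤ x + y := by
    intro h
    have := (integral_eq_iff_of_ae_le hxy hxy.abs
      (Filter.Eventually.of_forall fun y => le_abs_self _)).1 (by rw [h1, hx, abs_of_nonneg h])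
    filter_upwards [this] with y hy
    rw [hy]; positivity
  have hB : x ≤ 0 → ∀ᵐ y ∂ν, x + y ≤ 0 := by
    intro h
    have := (integral_eq_iff_of_ae_le hxy.neg hxy.abs
      (Filter.Eventually.of_forall fun y => neg_le_abs _)).1
        (by simp only [Pi.neg_apply]; rw [integral_neg, h1, hx, abs_of_nonpos h])
    filter_upwards [this] with y hy
    simp only [Pi.neg_apply] at hy
    have := abs_nonneg (x + y)
    linarith
  rcases lt_trichotomy x 0 with h | h | h
  · filter_upwards [hB h.le] with y hy
    exact ⟨fun h' => by linarith, fun _ => hy⟩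
  · filter_upwards [hB h.le, hA h.ge] with y hy hy'
    exact ⟨fun _ => hy', fun _ => hy⟩
  · filter_upwards [hA h.le] with y hy
    exact ⟨fun _ => hy, fun h' => by linarith⟩

lemma core_law3 (ν : Measure ℝ) [IsProbabilityMeasure ν] (hi : Integrable (fun x => x) ν)
    (h0 : ∫ x, x ∂ν = 0)
    (heq : (∫ z, |z.1 + z.2| ∂(ν.prod ν)) = ∫ x, |x| ∂ν) :
    (∀ᵐ x ∂ν, x = 0) ∨ ∃ m : ℝ, 0 < m ∧ ∀ᵐ x ∂ν, x = m ∨ x = -m := by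
  by_cases hz : ∀ᵐ x ∂ν, x = 0
  · exact Or.inl hz
  right
  have hG := core_law2 ν hi h0 heq
  have hG' : ∀ᵐ x ∂ν, ∀ᵐ y ∂ν, (0 ≤ y → 0 ≤ y + x) ∧ (y ≤ 0 → y + x ≤ 0) := by
    refine (Measure.ae_ae_comm (p := fun x y : ℝ =>
      (0 ≤ x → 0 ≤ x + y) ∧ (x ≤ 0 → x + y ≤ 0)) ?_).1 hG
    measurability
  have hne : ∀ᵐ x ∂ν, x ≠ 0 := by
    filter_upwards [hG] with x hx h
    subst h
    refine hz ?_
    filter_upwards [hx] with y hy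
    have h1 := hy.1 le_rfl
    have h2 := hy.2 le_rfl
    linarith
  have hpos : ∃ᵐ x ∂ν, 0 < x := by
    intro h
    refine hz ?_
    have h3 : (fun x : ℝ => x) ≤ᵐ[ν] fun _ => (0:ℝ) := by
      filter_upwards [h] with x hx using not_lt.1 hx
    exact (integral_eq_iff_of_ae_le hi (integrable_zero _ _ _) h3).1 (by simp [h0])
  have hneg : ∃ᵐ x ∂ν, x < 0 := by
    intro h
    refine hz ?_
    have h3 : (fun _ : ℝ => (0:ℝ)) ≤ᵐ[ν] fun x => x := by
      filter_upwards [h] with x hx using not_lt.1 hx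
    have := (integral_eq_iff_of_ae_le (integrable_zero _ _ _) hi h3).1 (by simp [h0])
    filter_upwards [this] with x hx using hx.symm
  obtain ⟨p, hp, hp1, hp2⟩ := (hpos.and_eventually (hG.and hG')).exists
  have hpn : ∀ᵐ y ∂ν, y < 0 → y = -p := by
    filter_upwards [hp1, hp2] with y h1 h2 hy
    have := h1.1 hp.le
    have := h2.2 hy.le
    linarith
  obtain ⟨q, hq, ⟨hq1, hq2⟩, hq3⟩ := (hneg.and_eventually ((hG.and hG').and hpn)).exists
  have hqp := hq3 hq
  refine ⟨p, hp, ?_⟩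
  filter_upwards [hpn, hq1, hq2, hne] with y h1 h2 h3 h4
  rcases lt_or_gt_of_ne h4 with h | h
  · exact Or.inr (h1 h)
  · left
    have := h2.2 hq.le
    have := h3.1 h.le
    linarith

/-- If `X` is bounded, centered, `Y` is an independent copy of `X` and
`E|X + Y| = E|X|`, then `X = 0` a.s. or `X` is a symmetric two-point variable. -/
theorem characterization_of_E_abs_add_eq {Ω : Type*} [MeasurableSpace Ω]
    (μ : Measure Ω) [IsProbabilityMeasure μ]
    (X Y : Ω → ℝ) (hXm : Measurable X) (hYm : Measurable Y)
    (c : ℝ) (hc : 0 < c) (hbdd : ∀ᵐ ω ∂μ, |X ω| ≤ c)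
    (hXint : Integrable X μ) (hXmean : ∫ ω, X ω ∂μ = 0)
    (hindep : IndepFun X Y μ) (hid : μ.map Y = μ.map X)
    (heq : (∫ ω, |X ω + Y ω| ∂μ) = ∫ ω, |X ω| ∂μ) :
    (∀ᵐ ω ∂μ, X ω = 0) ∨
    ∃ m : ℝ, 0 < m ∧ m ≤ c ∧
      μ {ω | X ω = -m} = 1/2 ∧ μ {ω | X ω = m} = 1/2 := by
  have hprob : IsProbabilityMeasure (μ.map X) := Measure.isProbabilityMeasure_map hXm.aemeasurable
  have hprod := (indepFun_iff_map_prod_eq_prod_map_map hXm.aemeasurable hYm.aemeasurable).1 hindep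
  rw [hid] at hprod
  have hi : Integrable (fun x : ℝ => x) (μ.map X) :=
    (integrable_map_measure (by fun_prop) hXm.aemeasurable).2 hXint
  have h0 : ∫ x, x ∂(μ.map X) = 0 := by
    rw [integral_map hXm.aemeasurable (by fun_prop)]; exact hXmean
  have he : (∫ z, |z.1 + z.2| ∂((μ.map X).prod (μ.map X))) = ∫ x, |x| ∂(μ.map X) := by
    rw [← hprod, integral_map (by fun_prop) (Measurable.aestronglyMeasurable (by fun_prop)),
      integral_map hXm.aemeasurable (Measurable.aestronglyMeasurable (by fun_prop))]
    exact heq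
  rcases core_law3 _ hi h0 he with h | ⟨m, hm, h⟩
  · exact Or.inl (ae_of_ae_map hXm.aemeasurable h)
  right
  have hX := ae_of_ae_map hXm.aemeasurable h
  have hmc : m ≤ c := by
    obtain ⟨ω, h1, h2⟩ := (hX.and hbdd).exists
    rcases h1 with h1 | h1 <;> rw [h1] at h2
    · exact (le_abs_self m).trans h2
    · rw [abs_neg] at h2
      exact (le_abs_self m).trans h2
  have hmA : MeasurableSet {ω | X ω = m} := hXm (measurableSet_singleton m)
  have hcompl : μ {ω | X ω = -m} = μ {ω | X ω = m}ᶜ := by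
    refine measure_congr ?_
    filter_upwards [hX] with ω hω
    refine propext ?_
    show X ω = -m ↔ ¬ (X ω = m)
    constructor
    · intro h1 h2
      linarith
    · intro h1
      exact hω.resolve_left h1
  have hXeq : X =ᵐ[μ] fun ω => ({ω | X ω = m}.indicator (fun _ => 2 * m) ω) - m := by
    filter_upwards [hX] with ω hω
    by_cases h1 : X ω = m
    · rw [Set.indicator_of_mem (by exact h1), h1]; ring
    · rw [Set.indicator_of_notMem (by exact h1), hω.resolve_left h1]; ring
  have hr : μ.real {ω | X ω = m} = 1 / 2 := by
    rw [integral_congr_ae hXeq, integral_sub ((integrable_const _).indicator hmA)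
      (integrable_const _), integral_indicator_const _ hmA] at hXmean
    simp at hXmean
    have : m * (2 * μ.real {ω | X ω = m} - 1) = 0 := by linarith
    rcases mul_eq_zero.1 this with h | h <;> linarith
  have hA : μ {ω | X ω = m} = 1 / 2 := by
    rw [← ENNReal.ofReal_toReal (measure_ne_top μ {ω | X ω = m})]
    change ENNReal.ofReal (μ.real _) = _
    rw [hr, ENNReal.ofReal_div_of_pos (by norm_num)]
    simp
  refine ⟨m, hm, hmc, ?_, hA⟩
  rw [hcompl, prob_compl_eq_one_sub hmA, hA]
  simp
end

section
/- A bivariate D-norm is idempotent if and only if it is the sup-norm or the L¹-norm: let Z = (Z_1, Z_2) be a generator on ℝ² and Z' an independent copy of Z; if E(max(|x_1| Z_1 Z'_1, |x_2| Z_2 Z'_2)) = E(max(|x_1| Z_1, |x_2| Z_2)) for all x ∈ ℝ², then either E(max(|x_1| Z_1, |x_2| Z_2)) = max(|x_1|, |x_2|) for all x ∈ ℝ², or E(max(|x_1| Z_1, |x_2| Z_2)) = |x_1| + |x_2| for all x ∈ ℝ². -/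
open MeasureTheory ProbabilityTheory

lemma aux_g1 : IntegrableOn (fun t : ℝ => min 1 t * t ^ (-(3/2) : ℝ)) (Set.Ioi 1) ∧
    ∫ t in Set.Ioi (1:ℝ), min 1 t * t ^ (-(3/2) : ℝ) = 2 := by
  have e : Set.EqOn (fun t : ℝ => t ^ (-(3/2) : ℝ)) (fun t : ℝ => min 1 t * t ^ (-(3/2) : ℝ))
      (Set.Ioi 1) := by
    intro t ht
    simp only [Set.mem_Ioi] at ht
    simp [min_eq_left ht.le]
  refine ⟨(integrableOn_Ioi_rpow_of_lt (by norm_num) one_pos).congr_fun e measurableSet_Ioi, ?_⟩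
  rw [← setIntegral_congr_fun measurableSet_Ioi e, integral_Ioi_rpow_of_lt (by norm_num) one_pos]
  norm_num

lemma aux_g2 : IntegrableOn (fun t : ℝ => min 1 t * t ^ (-(3/2) : ℝ)) (Set.Ioc 0 1) ∧
    ∫ t in Set.Ioc (0:ℝ) 1, min 1 t * t ^ (-(3/2) : ℝ) = 2 := by
  have e : Set.EqOn (fun t : ℝ => t ^ (-(1/2) : ℝ)) (fun t : ℝ => min 1 t * t ^ (-(3/2) : ℝ))
      (Set.Ioc 0 1) := by
    intro t ht
    simp only [Set.mem_Ioc] at ht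
    simp only [min_eq_right ht.2]
    rw [show (-(1/2) : ℝ) = 1 + (-(3/2)) by norm_num, Real.rpow_add ht.1, Real.rpow_one]
  have h1 : IntervalIntegrable (fun t : ℝ => t ^ (-(1/2) : ℝ)) volume 0 1 :=
    intervalIntegral.intervalIntegrable_rpow' (by norm_num)
  rw [intervalIntegrable_iff_integrableOn_Ioc_of_le zero_le_one] at h1
  refine ⟨h1.congr_fun e measurableSet_Ioc, ?_⟩
  rw [← setIntegral_congr_fun measurableSet_Ioc e, ← intervalIntegral.integral_of_le zero_le_one,
    integral_rpow (Or.inl (by norm_num))]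
  norm_num

lemma aux_g : IntegrableOn (fun t : ℝ => min 1 t * t ^ (-(3/2) : ℝ)) (Set.Ioi 0) ∧
    ∫ t in Set.Ioi (0:ℝ), min 1 t * t ^ (-(3/2) : ℝ) = 4 := by
  rw [← Set.Ioc_union_Ioi_eq_Ioi (zero_le_one (α := ℝ))]
  refine ⟨aux_g2.1.union aux_g1.1, ?_⟩
  rw [setIntegral_union (Set.Ioc_disjoint_Ioi le_rfl) measurableSet_Ioi aux_g2.1 aux_g1.1,
    aux_g1.2, aux_g2.2]
  norm_num

lemma aux_pt (u v : ℝ) (hu : 0 ≤ u) (hv : 0 ≤ v) :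
    ∫⁻ t in Set.Ioi (0:ℝ), ENNReal.ofReal (min u (t * v)) * ENNReal.ofReal (t ^ (-(3/2) : ℝ))
      = 4 * ENNReal.ofReal (√u * √v) := by
  rcases hu.eq_or_lt with rfl | hu
  · rw [setLIntegral_congr_fun (g := fun _ => 0) measurableSet_Ioi]
    · simp
    · intro t ht
      simp only [Set.mem_Ioi] at ht
      have : min 0 (t * v) = 0 := min_eq_left (by positivity)
      simp [this]
  rcases hv.eq_or_lt with rfl | hv
  · simp [min_eq_right hu.le]
  obtain ⟨a, ha, rfl⟩ : ∃ a : ℝ, 0 < a ∧ u = a ^ 2 :=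
    ⟨√u, Real.sqrt_pos.2 hu, (Real.sq_sqrt hu.le).symm⟩
  obtain ⟨b, hb, rfl⟩ : ∃ b : ℝ, 0 < b ∧ v = b ^ 2 :=
    ⟨√v, Real.sqrt_pos.2 hv, (Real.sq_sqrt hv.le).symm⟩
  have hk : 0 < (b / a) ^ 2 := by positivity
  have hk3 : ((b / a) ^ 2) ^ (-(3/2) : ℝ) = ((b / a) ^ 3)⁻¹ := by
    rw [← Real.rpow_natCast (b / a) 2, ← Real.rpow_mul (by positivity),
      ← Real.rpow_natCast (b / a) 3, ← Real.rpow_neg (by positivity)]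
    norm_num
  have e : Set.EqOn (fun t : ℝ => ENNReal.ofReal (min (a^2) (t * b^2)) *
        ENNReal.ofReal (t ^ (-(3/2) : ℝ)))
      (fun t : ℝ => ENNReal.ofReal ((b ^ 3 / a) *
        (min 1 ((b / a) ^ 2 * t) * ((b / a) ^ 2 * t) ^ (-(3/2) : ℝ)))) (Set.Ioi 0) := by
    intro t ht
    simp only [Set.mem_Ioi] at ht
    simp only
    rw [← ENNReal.ofReal_mul (by positivity), Real.mul_rpow hk.le ht.le, hk3]
    congr 1
    have : min (a^2) (t * b^2) = a ^ 2 * min 1 ((b / a) ^ 2 * t) := by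
      rw [mul_min_of_nonneg _ _ (by positivity)]
      congr 1
      · ring
      · field_simp
    rw [this]
    field_simp
  rw [setLIntegral_congr_fun measurableSet_Ioi e, ← ofReal_integral_eq_lintegral_ofReal]
  · rw [integral_const_mul,
      integral_comp_mul_left_Ioi (fun t : ℝ => min 1 t * t ^ (-(3/2) : ℝ)) 0 hk, mul_zero, aux_g.2,
      Real.sqrt_sq ha.le, Real.sqrt_sq hb.le,
      show (4 : ENNReal) = ENNReal.ofReal 4 by norm_num, ← ENNReal.ofReal_mul (by norm_num)]
    congr 1
    simp only [smul_eq_mul]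
    field_simp
  · refine Integrable.const_mul ?_ _
    have := (integrableOn_Ioi_comp_mul_left_iff (fun t : ℝ => min 1 t * t ^ (-(3/2) : ℝ)) 0 hk).2
      (by rw [mul_zero]; exact aux_g.1)
    exact this
  · filter_upwards [ae_restrict_mem measurableSet_Ioi] with t ht
    simp only [Set.mem_Ioi] at ht
    simp only [Pi.zero_apply]
    positivity

lemma aux_tonelli {Ω : Type*} [MeasurableSpace Ω] (μ : Measure Ω) [IsProbabilityMeasure μ]
    (U V : Ω → ℝ) (hU : Measurable U) (hV : Measurable V)
    (hU0 : ∀ᵐ ω ∂μ, 0 ≤ U ω) (hV0 : ∀ᵐ ω ∂μ, 0 ≤ V ω) (hUi : Integrable U μ)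
    (hVi : Integrable V μ) (hU1 : ∫ ω, U ω ∂μ = 1) (hV1 : ∫ ω, V ω ∂μ = 1) :
    4 * ∫⁻ ω, ENNReal.ofReal (√(U ω) * √(V ω)) ∂μ =
      ∫⁻ t in Set.Ioi (0:ℝ), ENNReal.ofReal (1 + t - ∫ ω, max (U ω) (t * V ω) ∂μ) *
        ENNReal.ofReal (t ^ (-(3/2) : ℝ)) := by
  rw [← lintegral_const_mul _ (by fun_prop)]
  have h1 : ∫⁻ ω, 4 * ENNReal.ofReal (√(U ω) * √(V ω)) ∂μ = ∫⁻ ω, (∫⁻ t in Set.Ioi (0:ℝ),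
      ENNReal.ofReal (min (U ω) (t * V ω)) * ENNReal.ofReal (t ^ (-(3/2) : ℝ))) ∂μ := by
    apply lintegral_congr_ae
    filter_upwards [hU0, hV0] with ω h1 h2
    exact (aux_pt _ _ h1 h2).symm
  rw [h1, lintegral_lintegral_swap]
  · apply setLIntegral_congr_fun measurableSet_Ioi
    intro t ht
    simp only [Set.mem_Ioi] at ht
    simp only
    rw [lintegral_mul_const _ (by fun_prop)]
    congr 1
    have hVt : Integrable (fun ω => t * V ω) μ := hVi.const_mul t
    have hmax : Integrable (fun ω => max (U ω) (t * V ω)) μ := hUi.sup hVt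
    have hmin : Integrable (fun ω => min (U ω) (t * V ω)) μ := hUi.inf hVt
    rw [← ofReal_integral_eq_lintegral_ofReal hmin]
    · congr 1
      have : ∫ ω, min (U ω) (t * V ω) ∂μ + ∫ ω, max (U ω) (t * V ω) ∂μ = 1 + t := by
        rw [← integral_add hmin hmax]
        simp_rw [min_add_max]
        rw [integral_add hUi hVt, integral_const_mul, hU1, hV1, mul_one]
      linarith
    · filter_upwards [hU0, hV0] with ω h1 h2
      simp only [Pi.zero_apply]
      positivity
  · apply Measurable.aemeasurable
    simp only [Function.uncurry_def]
    fun_prop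

/-- A bivariate D-norm is idempotent iff it is the sup-norm or the L¹-norm. -/
theorem bivariate_idempotent_dNorm {Ω : Type*} [MeasurableSpace Ω]
    (μ : Measure Ω) [IsProbabilityMeasure μ]
    (Z Z' : Ω → ℝ × ℝ) (hZm : Measurable Z) (hZ'm : Measurable Z')
    (hZnn₁ : ∀ᵐ ω ∂μ, 0 ≤ (Z ω).1) (hZnn₂ : ∀ᵐ ω ∂μ, 0 ≤ (Z ω).2)
    (hZint₁ : Integrable (fun ω => (Z ω).1) μ)
    (hZint₂ : Integrable (fun ω => (Z ω).2) μ)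
    (hZmean₁ : ∫ ω, (Z ω).1 ∂μ = 1) (hZmean₂ : ∫ ω, (Z ω).2 ∂μ = 1)
    (hindep : IndepFun Z Z' μ) (hid : μ.map Z' = μ.map Z)
    (hidem : ∀ x : ℝ × ℝ,
      (∫ ω, max (|x.1| * ((Z ω).1 * (Z' ω).1)) (|x.2| * ((Z ω).2 * (Z' ω).2)) ∂μ) =
        ∫ ω, max (|x.1| * (Z ω).1) (|x.2| * (Z ω).2) ∂μ) :
    (∀ x : ℝ × ℝ,
      (∫ ω, max (|x.1| * (Z ω).1) (|x.2| * (Z ω).2) ∂μ) = max |x.1| |x.2|) ∨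
    (∀ x : ℝ × ℝ,
      (∫ ω, max (|x.1| * (Z ω).1) (|x.2| * (Z ω).2) ∂μ) = |x.1| + |x.2|) := by
  have hID : IdentDistrib Z' Z μ μ := ⟨hZ'm.aemeasurable, hZm.aemeasurable, hid⟩
  have hI1 : IdentDistrib (fun ω => (Z' ω).1) (fun ω => (Z ω).1) μ μ := hID.comp measurable_fst
  have hI2 : IdentDistrib (fun ω => (Z' ω).2) (fun ω => (Z ω).2) μ μ := hID.comp measurable_snd
  have hn1 : ∀ᵐ ω ∂μ, 0 ≤ (Z' ω).1 :=
    hI1.symm.ae_snd measurableSet_Ici hZnn₁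
  have hn2 : ∀ᵐ ω ∂μ, 0 ≤ (Z' ω).2 :=
    hI2.symm.ae_snd measurableSet_Ici hZnn₂
  have hi1 : Integrable (fun ω => (Z' ω).1) μ := hI1.integrable_iff.2 hZint₁
  have hi2 : Integrable (fun ω => (Z' ω).2) μ := hI2.integrable_iff.2 hZint₂
  have hm1 : ∫ ω, (Z' ω).1 ∂μ = 1 := hI1.integral_eq.trans hZmean₁
  have hm2 : ∫ ω, (Z' ω).2 ∂μ = 1 := hI2.integral_eq.trans hZmean₂
  have hind1 : IndepFun (fun ω => (Z ω).1) (fun ω => (Z' ω).1) μ :=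
    hindep.comp measurable_fst measurable_fst
  have hind2 : IndepFun (fun ω => (Z ω).2) (fun ω => (Z' ω).2) μ :=
    hindep.comp measurable_snd measurable_snd
  have hp1 : Integrable (fun ω => (Z ω).1 * (Z' ω).1) μ := hind1.integrable_mul hZint₁ hi1
  have hp2 : Integrable (fun ω => (Z ω).2 * (Z' ω).2) μ := hind2.integrable_mul hZint₂ hi2
  have hpm1 : ∫ ω, (Z ω).1 * (Z' ω).1 ∂μ = 1 := by
    rw [hind1.integral_fun_mul_eq_mul_integral hZint₁.1 hi1.1, hZmean₁, hm1, one_mul]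
  have hpm2 : ∫ ω, (Z ω).2 * (Z' ω).2 ∂μ = 1 := by
    rw [hind2.integral_fun_mul_eq_mul_integral hZint₂.1 hi2.1, hZmean₂, hm2, one_mul]
  have T1 := aux_tonelli μ (fun ω => (Z ω).1) (fun ω => (Z ω).2) (by fun_prop) (by fun_prop)
    hZnn₁ hZnn₂ hZint₁ hZint₂ hZmean₁ hZmean₂
  have T2 := aux_tonelli μ (fun ω => (Z ω).1 * (Z' ω).1) (fun ω => (Z ω).2 * (Z' ω).2)
    (by fun_prop) (by fun_prop)
    (by filter_upwards [hZnn₁, hn1] with ω a b using mul_nonneg a b)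
    (by filter_upwards [hZnn₂, hn2] with ω a b using mul_nonneg a b) hp1 hp2 hpm1 hpm2
  have T3 : ∫⁻ ω, ENNReal.ofReal (√((Z ω).1 * (Z' ω).1) * √((Z ω).2 * (Z' ω).2)) ∂μ
      = ∫⁻ ω, ENNReal.ofReal (√((Z ω).1) * √((Z ω).2)) ∂μ := by
    have : 4 * ∫⁻ ω, ENNReal.ofReal (√((Z ω).1 * (Z' ω).1) * √((Z ω).2 * (Z' ω).2)) ∂μ
      = 4 * ∫⁻ ω, ENNReal.ofReal (√((Z ω).1) * √((Z ω).2)) ∂μ := by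
      rw [T1, T2]
      apply setLIntegral_congr_fun measurableSet_Ioi
      intro t ht
      simp only [Set.mem_Ioi] at ht
      have := hidem (1, t)
      simp only [abs_one, one_mul, abs_of_pos ht] at this
      simp only [this]
    exact (ENNReal.mul_right_inj (by norm_num) (by norm_num)).1 this
  let f : ℝ × ℝ → ENNReal := fun z => ENNReal.ofReal (√z.1 * √z.2)
  have hf : Measurable f := by fun_prop
  have T4 : ∫⁻ ω, ENNReal.ofReal (√((Z ω).1 * (Z' ω).1) * √((Z ω).2 * (Z' ω).2)) ∂μ
      = (∫⁻ ω, f (Z ω) ∂μ) * ∫⁻ ω, f (Z' ω) ∂μ := by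
    refine Eq.trans ?_ (lintegral_mul_eq_lintegral_mul_lintegral_of_indepFun (hf.comp hZm)
      (hf.comp hZ'm) (hindep.comp hf hf))
    apply lintegral_congr_ae
    filter_upwards [hZnn₁, hZnn₂] with ω a b
    simp only [Pi.mul_apply, Function.comp, f]
    rw [← ENNReal.ofReal_mul (by positivity), Real.sqrt_mul a, Real.sqrt_mul b]
    congr 1
    ring
  have T5 : ∫⁻ ω, f (Z' ω) ∂μ = ∫⁻ ω, f (Z ω) ∂μ := (hID.comp hf).lintegral_eq
  have hle : ∀ᵐ ω ∂μ, 2 * (√((Z ω).1) * √((Z ω).2)) ≤ (Z ω).1 + (Z ω).2 := by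
    filter_upwards [hZnn₁, hZnn₂] with ω a b
    nlinarith [Real.sq_sqrt a, Real.sq_sqrt b, sq_nonneg (√((Z ω).1) - √((Z ω).2))]
  have hsi : Integrable (fun ω => √((Z ω).1) * √((Z ω).2)) μ := by
    refine (hZint₁.add hZint₂).mono' (by apply Measurable.aestronglyMeasurable; fun_prop) ?_
    filter_upwards [hle] with ω h
    have : 0 ≤ √((Z ω).1) * √((Z ω).2) := by positivity
    rw [Real.norm_of_nonneg this, Pi.add_apply]
    linarith
  have hs0 : 0 ≤ᵐ[μ] (fun ω => √((Z ω).1) * √((Z ω).2)) :=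
    Filter.Eventually.of_forall fun ω => by simp only [Pi.zero_apply]; positivity
  have hs := ofReal_integral_eq_lintegral_ofReal hsi hs0
  set s := ∫ ω, √((Z ω).1) * √((Z ω).2) ∂μ with hsdef
  have hspos : 0 ≤ s := integral_nonneg_of_ae hs0
  have hss : s * s = s := by
    rw [T4, T5] at T3
    simp only [f] at T3
    rw [← hs, ← ENNReal.ofReal_mul hspos] at T3
    exact (ENNReal.ofReal_eq_ofReal_iff (by positivity) hspos).1 T3
  have hcase : s = 1 ∨ s = 0 := by
    rcases eq_or_ne s 0 with h | h
    · exact Or.inr h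
    · exact Or.inl (mul_left_cancel₀ h (by rw [hss, mul_one]))
  rcases hcase with h | h
  · left
    have hz : ∀ᵐ ω ∂μ, (Z ω).1 = (Z ω).2 := by
      have hA : Integrable (fun ω => (Z ω).1 + (Z ω).2 - 2 * (√((Z ω).1) * √((Z ω).2))) μ :=
        (hZint₁.add hZint₂).sub (hsi.const_mul 2)
      have h0 : ∫ ω, ((Z ω).1 + (Z ω).2 - 2 * (√((Z ω).1) * √((Z ω).2))) ∂μ = 0 := by
        have h12 : Integrable (fun ω => (Z ω).1 + (Z ω).2) μ := hZint₁.add hZint₂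
        rw [integral_sub h12 (hsi.const_mul 2), integral_add hZint₁ hZint₂,
          integral_const_mul, ← hsdef, h, hZmean₁, hZmean₂]
        norm_num
      rw [integral_eq_zero_iff_of_nonneg_ae (by
        filter_upwards [hle] with ω h
        simp only [Pi.zero_apply]
        linarith) hA] at h0
      filter_upwards [h0, hZnn₁, hZnn₂] with ω h a b
      simp only [Pi.zero_apply] at h
      have h2 : (√((Z ω).1) - √((Z ω).2)) ^ 2 = 0 := by
        nlinarith [Real.sq_sqrt a, Real.sq_sqrt b]
      have h3 : √((Z ω).1) = √((Z ω).2) := sub_eq_zero.1 (pow_eq_zero_iff (by norm_num) |>.1 h2)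
      rw [← Real.sq_sqrt a, ← Real.sq_sqrt b, h3]
    intro x
    have : ∫ ω, max (|x.1| * (Z ω).1) (|x.2| * (Z ω).2) ∂μ
        = ∫ ω, max |x.1| |x.2| * (Z ω).1 ∂μ := by
      apply integral_congr_ae
      filter_upwards [hz, hZnn₁] with ω h a
      rw [← h, max_mul_of_nonneg _ _ a]
    rw [this, integral_const_mul, hZmean₁, mul_one]
  · right
    rw [hsdef, integral_eq_zero_iff_of_nonneg_ae hs0 hsi] at h
    intro x
    have : ∫ ω, max (|x.1| * (Z ω).1) (|x.2| * (Z ω).2) ∂μ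
        = ∫ ω, (|x.1| * (Z ω).1 + |x.2| * (Z ω).2) ∂μ := by
      apply integral_congr_ae
      filter_upwards [h, hZnn₁, hZnn₂] with ω h a b
      simp only [Pi.zero_apply, mul_eq_zero, Real.sqrt_eq_zero a, Real.sqrt_eq_zero b] at h
      rcases h with h | h
      · rw [h, mul_zero, zero_add]
        exact max_eq_right (by positivity)
      · rw [h, mul_zero, add_zero]
        exact max_eq_left (by positivity)
    rw [this, integral_add (hZint₁.const_mul _) (hZint₂.const_mul _), integral_const_mul,
      integral_const_mul, hZmean₁, hZmean₂, mul_one, mul_one]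
end

section
/- If every bivariate projection of a D-norm is the L¹-norm, then the D-norm is the L¹-norm: let Z = (Z_1, …, Z_d) be a generator on ℝ^d such that for all 1 ≤ i < j ≤ d and all (x, y) ∈ ℝ², E(max(|x| Z_i, |y| Z_j)) = |x| + |y|. Then E(max_{1≤i≤d} |x_i| Z_i) = Σ_{i=1}^d |x_i| for all x ∈ ℝ^d. -/
open MeasureTheory

/-- If every bivariate projection of a D-norm is the L¹-norm, then the D-norm
is the L¹-norm. -/
theorem dNorm_eq_l1_of_bivariate_projections {d : ℕ} (hd : 0 < d)
    {Ω : Type*} [MeasurableSpace Ω] (μ : Measure Ω) [IsProbabilityMeasure μ]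
    (Z : Ω → Fin d → ℝ) (hZm : Measurable Z)
    (hZnn : ∀ i, ∀ᵐ ω ∂μ, 0 ≤ Z ω i)
    (hZint : ∀ i, Integrable (fun ω => Z ω i) μ)
    (hZmean : ∀ i, ∫ ω, Z ω i ∂μ = 1)
    (hproj : ∀ i j : Fin d, i < j → ∀ x y : ℝ,
      (∫ ω, max (|x| * Z ω i) (|y| * Z ω j) ∂μ) = |x| + |y|) :
    ∀ x : Fin d → ℝ, (∫ ω, ⨆ i, |x i| * Z ω i ∂μ) = ∑ i, |x i| := by
  have hmin : ∀ i j : Fin d, i < j → ∀ᵐ ω ∂μ, min (Z ω i) (Z ω j) = 0 := by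
    intro i j hij
    have h1 := hproj i j hij 1 1
    simp only [abs_one, one_mul] at h1
    have hint : Integrable (fun ω => min (Z ω i) (Z ω j)) μ := (hZint i).inf (hZint j)
    have hmax : Integrable (fun ω => max (Z ω i) (Z ω j)) μ := (hZint i).sup (hZint j)
    have h2 : ∫ ω, min (Z ω i) (Z ω j) ∂μ = 0 := by
      have h3 : ∫ ω, (min (Z ω i) (Z ω j) + max (Z ω i) (Z ω j)) ∂μ
          = ∫ ω, (Z ω i + Z ω j) ∂μ := by
        simp only [min_add_max]
      rw [integral_add hint hmax, integral_add (hZint i) (hZint j), hZmean, hZmean, h1] at h3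
      linarith
    have h0 : 0 ≤ᵐ[μ] fun ω => min (Z ω i) (Z ω j) := by
      filter_upwards [hZnn i, hZnn j] with ω a b
      exact le_min a b
    exact (integral_eq_zero_iff_of_nonneg_ae h0 hint).1 h2
  intro x
  have hall : ∀ᵐ ω ∂μ, ∀ i j : Fin d, i < j → min (Z ω i) (Z ω j) = 0 := by
    simp only [ae_all_iff]
    exact hmin
  have hnn : ∀ᵐ ω ∂μ, ∀ i, 0 ≤ Z ω i := ae_all_iff.2 hZnn
  have key : ∀ᵐ ω ∂μ, (⨆ i, |x i| * Z ω i) = ∑ i, |x i| * Z ω i := by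
    filter_upwards [hall, hnn] with ω h1 h2
    haveI : Nonempty (Fin d) := ⟨⟨0, hd⟩⟩
    have hn : ∀ i ∈ Finset.univ, 0 ≤ |x i| * Z ω i :=
      fun i _ => mul_nonneg (abs_nonneg _) (h2 i)
    apply le_antisymm
    · exact ciSup_le fun i => Finset.single_le_sum hn (Finset.mem_univ i)
    · have hb : BddAbove (Set.range fun i => |x i| * Z ω i) := Set.finite_range _ |>.bddAbove
      obtain ⟨k, hk⟩ : ∃ k, ∀ i, i ≠ k → Z ω i = 0 := by
        by_cases h : ∃ k, Z ω k ≠ 0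
        · obtain ⟨k, hk⟩ := h
          refine ⟨k, fun i hi => ?_⟩
          rcases lt_or_gt_of_ne hi with hl | hl
          · have := h1 _ _ hl
            rcases min_choice (Z ω i) (Z ω k) with e | e
            · rw [← e, this]
            · exact absurd (e.symm.trans this) hk
          · have := h1 _ _ hl
            rcases min_choice (Z ω k) (Z ω i) with e | e
            · exact absurd (e.symm.trans this) hk
            · rw [← e, this]
        · push Not at h
          exact ⟨⟨0, hd⟩, fun i _ => h i⟩
      rw [Finset.sum_eq_single k (fun i _ hi => by rw [hk i hi, mul_zero]) (by simp)]
      exact le_ciSup hb k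
  rw [integral_congr_ae key, integral_finsetSum _ fun i _ => (hZint i).const_mul _]
  simp [integral_const_mul, hZmean]
end

section
/- Let ‖·‖_D be a D-norm on ℝ^d, generated by Z with independent copy Z', such that each bivariate projection is different from the bivariate sup-norm, i.e. for all 1 ≤ i < j ≤ d there exists (x, y) ∈ ℝ² with E(max(|x| Z_i, |y| Z_j)) ≠ max(|x|, |y|). Then ‖·‖_D is idempotent if and only if ‖x‖_D = Σ_{i=1}^d |x_i| for all x ∈ ℝ^d. -/
open MeasureTheory ProbabilityTheory

theorem aux_sup_pair {d : ℕ} (f : Fin d → ℝ) (hf : ∀ k, 0 ≤ f k) (i j : Fin d) (hij : i ≠ j)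
    (q : ℝ) (hq : 0 < q) :
    (⨆ k, |(if k = i then (1:ℝ) else if k = j then q else 0)| * f k) = max (f i) (q * f j) := by
  have : Nonempty (Fin d) := ⟨i⟩
  apply le_antisymm
  · apply ciSup_le
    intro k
    by_cases h1 : k = i
    · subst h1; simp
    · by_cases h2 : k = j
      · subst h2; simp [h1, abs_of_pos hq]
      · simp [h1, h2, hf i]
  · apply max_le
    · have := le_ciSup (f := fun k => |(if k = i then (1:ℝ) else if k = j then q else 0)| * f k)
        (Set.finite_range _).bddAbove i
      simpa using this
    · have := le_ciSup (f := fun k => |(if k = i then (1:ℝ) else if k = j then q else 0)| * f k)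
        (Set.finite_range _).bddAbove j
      simpa [hij.symm, abs_of_pos hq] using this

theorem aux_sup_sum {d : ℕ} (f : Fin d → ℝ) (hf : ∀ k, 0 ≤ f k)
    (h : ∀ i j, i < j → f i * f j = 0) : (⨆ k, f k) = ∑ k, f k := by
  have h' : ∀ i j, i ≠ j → f i * f j = 0 := by
    intro i j hij
    rcases lt_or_gt_of_ne hij with h1 | h1
    · exact h i j h1
    · rw [mul_comm]; exact h j i h1
  by_cases hz : ∃ i, f i ≠ 0
  · obtain ⟨i, hi⟩ := hz
    have : Nonempty (Fin d) := ⟨i⟩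
    have h0 : ∀ k, k ≠ i → f k = 0 := fun k hk => by
      rcases mul_eq_zero.1 (h' k i hk) with h1 | h1
      · exact h1
      · exact absurd h1 hi
    rw [Finset.sum_eq_single i (fun k _ hk => h0 k hk) (by simp)]
    apply le_antisymm
    · apply ciSup_le
      intro k
      by_cases hk : k = i
      · rw [hk]
      · rw [h0 k hk]; exact hf i
    · exact le_ciSup (Set.finite_range _).bddAbove i
  · push Not at hz
    simp [hz]

theorem aux_sup_le_sum_s12 {d : ℕ} (f : Fin d → ℝ) (hf : ∀ k, 0 ≤ f k) : (⨆ k, f k) ≤ ∑ k, f k :=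
  Real.iSup_le (fun k => Finset.single_le_sum (fun k _ => hf k) (Finset.mem_univ k))
    (Finset.sum_nonneg fun k _ => hf k)

theorem aux_sum_sup {d : ℕ} (f : Fin d → ℝ) (hf : ∀ k, 0 ≤ f k)
    (h : (⨆ k, f k) = ∑ k, f k) (i j : Fin d) (hij : i < j) : f i * f j = 0 := by
  have : Nonempty (Fin d) := ⟨i⟩
  obtain ⟨k, hk⟩ := exists_eq_ciSup_of_finite (f := f)
  rw [h] at hk
  have key : ∀ l, l ≠ k → f l = 0 := by
    intro l hl
    have h1 : f k + f l ≤ ∑ k, f k := by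
      rw [← Finset.sum_pair hl.symm]
      exact Finset.sum_le_sum_of_subset_of_nonneg (Finset.subset_univ _) (fun k _ _ => hf k)
    linarith [hf l]
  by_cases hi : i = k
  · rw [key j (by rw [← hi]; exact hij.ne'), mul_zero]
  · rw [key i hi, zero_mul]

section
variable {d : ℕ} {Ω : Type*} [MeasurableSpace Ω] {μ : Measure Ω} [IsProbabilityMeasure μ]
    {Z Z' : Ω → Fin d → ℝ}

theorem aux_ident (hZm : Measurable Z) (hZ'm : Measurable Z') (hid : μ.map Z' = μ.map Z) :
    IdentDistrib Z' Z μ μ := ⟨hZ'm.aemeasurable, hZm.aemeasurable, hid⟩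

theorem aux_prod (hZm : Measurable Z) (hZ'm : Measurable Z')
    (hZint : ∀ i, Integrable (fun ω => Z ω i) μ)
    (hZmean : ∀ i, ∫ ω, Z ω i ∂μ = 1)
    (hindep : IndepFun Z Z' μ) (hid : μ.map Z' = μ.map Z)
    (i : Fin d) (g : (Fin d → ℝ) → ℝ) (hg : Measurable g)
    (hgi : Integrable (fun ω => g (Z ω)) μ) :
    Integrable (fun ω => Z ω i * g (Z' ω)) μ ∧
      ∫ ω, Z ω i * g (Z' ω) ∂μ = ∫ ω, g (Z ω) ∂μ := by
  have hI := (aux_ident hZm hZ'm hid).comp hg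
  have hind : IndepFun (fun ω => Z ω i) (fun ω => g (Z' ω)) μ :=
    hindep.comp (measurable_pi_apply i) hg
  have hgi' : Integrable (fun ω => g (Z' ω)) μ := hI.integrable_iff.2 hgi
  refine ⟨hind.integrable_mul (hZint i) hgi', ?_⟩
  have := hind.integral_mul_eq_mul_integral (hZint i).aestronglyMeasurable
    hgi'.aestronglyMeasurable
  rw [hZmean i, one_mul] at this
  exact this.trans hI.integral_eq

theorem aux_nonneg' (hZm : Measurable Z) (hZ'm : Measurable Z')
    (hZnn : ∀ i, ∀ᵐ ω ∂μ, 0 ≤ Z ω i) (hid : μ.map Z' = μ.map Z) (i : Fin d) :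
    ∀ᵐ ω ∂μ, 0 ≤ Z' ω i :=
  ((aux_ident hZm hZ'm hid).symm.ae_snd (p := fun z => 0 ≤ z i)
    (measurableSet_le measurable_const (measurable_pi_apply i)) (hZnn i))

theorem aux_key (hZm : Measurable Z) (hZ'm : Measurable Z')
    (hZnn : ∀ i, ∀ᵐ ω ∂μ, 0 ≤ Z ω i)
    (hZint : ∀ i, Integrable (fun ω => Z ω i) μ)
    (hZmean : ∀ i, ∫ ω, Z ω i ∂μ = 1)
    (hindep : IndepFun Z Z' μ) (hid : μ.map Z' = μ.map Z)
    (H : ∀ x : Fin d → ℝ,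
      (∫ ω, ⨆ i, |x i| * (Z ω i * Z' ω i) ∂μ) = ∫ ω, ⨆ i, |x i| * Z ω i ∂μ)
    (i j : Fin d) (hij : i ≠ j) (q : ℝ) (hq : 0 < q) :
    ∀ᵐ ω ∂μ, q * Z' ω j < Z' ω i → q * (Z ω j * Z' ω j) ≤ Z ω i * Z' ω i := by
  have hn := ae_all_iff.2 hZnn
  have hn' := ae_all_iff.2 (aux_nonneg' hZm hZ'm hZnn hid)
  have h1 := H (fun k => if k = i then (1:ℝ) else if k = j then q else 0)
  have e1 : (∫ ω, ⨆ k, |(if k = i then (1:ℝ) else if k = j then q else 0)| * (Z ω k * Z' ω k) ∂μ)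
      = ∫ ω, max (Z ω i * Z' ω i) (q * (Z ω j * Z' ω j)) ∂μ := by
    apply integral_congr_ae
    filter_upwards [hn, hn'] with ω h h'
    exact aux_sup_pair (fun k => Z ω k * Z' ω k) (fun k => mul_nonneg (h k) (h' k)) i j hij q hq
  have e2 : (∫ ω, ⨆ k, |(if k = i then (1:ℝ) else if k = j then q else 0)| * (Z ω k) ∂μ)
      = ∫ ω, max (Z ω i) (q * (Z ω j)) ∂μ := by
    apply integral_congr_ae
    filter_upwards [hn] with ω h
    exact aux_sup_pair (fun k => Z ω k) h i j hij q hq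
  rw [e1, e2] at h1
  let C : Set (Fin d → ℝ) := {z | q * z j < z i}
  have hC : MeasurableSet C :=
    measurableSet_lt (by fun_prop) (by fun_prop)
  let g1 : (Fin d → ℝ) → ℝ := C.indicator (fun z => z i)
  let g2 : (Fin d → ℝ) → ℝ := Cᶜ.indicator (fun z => q * z j)
  have hg1 : Measurable g1 := (measurable_pi_apply i).indicator hC
  have hg2 : Measurable g2 := ((measurable_pi_apply j).const_mul q).indicator hC.compl
  have hi1 : Integrable (fun ω => g1 (Z ω)) μ := (hZint i).indicator (hZm hC)
  have hi2 : Integrable (fun ω => g2 (Z ω)) μ := ((hZint j).const_mul q).indicator (hZm hC.compl)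
  obtain ⟨p1, p1'⟩ := aux_prod hZm hZ'm hZint hZmean hindep hid i g1 hg1 hi1
  obtain ⟨p2, p2'⟩ := aux_prod hZm hZ'm hZint hZmean hindep hid j g2 hg2 hi2
  have a1 := (aux_prod hZm hZ'm hZint hZmean hindep hid i (fun z => z i)
    (measurable_pi_apply i) (hZint i)).1
  have a2 := (aux_prod hZm hZ'm hZint hZmean hindep hid j (fun z => z j)
    (measurable_pi_apply j) (hZint j)).1
  have hmax : ∀ z, max (z i) (q * z j) = g1 z + g2 z := by
    intro z
    by_cases hz : z ∈ C
    · have : q * z j < z i := hz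
      simp [g1, g2, hz, this.le]
    · have : z i ≤ q * z j := not_lt.1 hz
      simp [g1, g2, hz, this]
  have s : ∫ ω, (Z ω i * g1 (Z' ω) + Z ω j * g2 (Z' ω)) ∂μ
      = ∫ ω, max (Z ω i * Z' ω i) (q * (Z ω j * Z' ω j)) ∂μ := by
    rw [h1, integral_add p1 p2, p1', p2', ← integral_add hi1 hi2]
    simp only [hmax]
  have hle : (fun ω => Z ω i * g1 (Z' ω) + Z ω j * g2 (Z' ω)) ≤ᵐ[μ]
      fun ω => max (Z ω i * Z' ω i) (q * (Z ω j * Z' ω j)) := by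
    refine Filter.Eventually.of_forall fun ω => ?_
    by_cases hz : Z' ω ∈ C
    · simp [g1, g2, hz]
    · simp only [g1, g2, hz, Set.indicator_of_notMem, not_false_eq_true, Set.mem_compl_iff,
        Set.indicator_of_mem, mul_zero, zero_add]
      refine le_trans (le_of_eq (by ring)) (le_max_right _ _)
  have := (integral_eq_iff_of_ae_le (p1.add p2) (a1.sup (a2.const_mul q)) hle).1 s
  filter_upwards [this] with ω h hc
  have hz : Z' ω ∈ C := hc
  have h' : Z ω i * g1 (Z' ω) + Z ω j * g2 (Z' ω)
    = max (Z ω i * Z' ω i) (q * (Z ω j * Z' ω j)) := h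
  simp only [g1, g2, hz, Set.indicator_of_mem, Set.mem_compl_iff, not_true_eq_false,
    not_false_eq_true, Set.indicator_of_notMem, mul_zero, add_zero] at h'
  rw [h']; exact le_max_right _ _

theorem aux_dichotomy (hZm : Measurable Z) (hZ'm : Measurable Z')
    (hZnn : ∀ i, ∀ᵐ ω ∂μ, 0 ≤ Z ω i)
    (hZint : ∀ i, Integrable (fun ω => Z ω i) μ)
    (hZmean : ∀ i, ∫ ω, Z ω i ∂μ = 1)
    (hindep : IndepFun Z Z' μ) (hid : μ.map Z' = μ.map Z)
    (H : ∀ x : Fin d → ℝ,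
      (∫ ω, ⨆ i, |x i| * (Z ω i * Z' ω i) ∂μ) = ∫ ω, ⨆ i, |x i| * Z ω i ∂μ)
    (i j : Fin d) (hij : i ≠ j) :
    (∀ᵐ ω ∂μ, Z ω j = Z ω i) ∨ (∀ᵐ ω ∂μ, Z ω i * Z ω j = 0) := by
  have hn := ae_all_iff.2 hZnn
  have hn' := ae_all_iff.2 (aux_nonneg' hZm hZ'm hZnn hid)
  have hk : ∀ᵐ ω ∂μ, ∀ q : {q : ℚ // 0 < q}, ((q : ℚ) : ℝ) * Z' ω j < Z' ω i →
      ((q : ℚ) : ℝ) * (Z ω j * Z' ω j) ≤ Z ω i * Z' ω i := by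
    rw [ae_all_iff]
    intro q
    exact aux_key hZm hZ'm hZnn hZint hZmean hindep hid H i j hij _ (by exact_mod_cast q.2)
  let A : Set (Fin d → ℝ) := {z | z i < z j}
  let B : Set (Fin d → ℝ) := {z | 0 < z i * z j}
  have hA : MeasurableSet A := measurableSet_lt (measurable_pi_apply i) (measurable_pi_apply j)
  have hB : MeasurableSet B :=
    measurableSet_lt measurable_const ((measurable_pi_apply i).mul (measurable_pi_apply j))
  have hAB : μ (Z ⁻¹' A ∩ Z' ⁻¹' B) = 0 := by
    have : ∀ᵐ ω ∂μ, ω ∉ Z ⁻¹' A ∩ Z' ⁻¹' B := by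
      filter_upwards [hk, hn, hn'] with ω hk h h'
      rintro ⟨ha, hb⟩
      have ha : Z ω i < Z ω j := ha
      have hb : 0 < Z' ω i * Z' ω j := hb
      have hi' : 0 < Z' ω i := pos_of_mul_pos_left hb (h' j)
      have hj' : 0 < Z' ω j := pos_of_mul_pos_right hb (h' i)
      have hj : 0 < Z ω j := (h i).trans_lt ha
      have hlt : Z ω i * Z' ω i / (Z ω j * Z' ω j) < Z' ω i / Z' ω j := by
        rw [div_lt_div_iff₀ (by positivity) hj']
        have : 0 < (Z ω j - Z ω i) * (Z' ω i * Z' ω j) := mul_pos (by linarith) hb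
        nlinarith
      obtain ⟨q, hq1, hq2⟩ := exists_rat_btwn hlt
      have hq0 : (0:ℝ) < q := lt_of_le_of_lt
        (div_nonneg (mul_nonneg (h i) hi'.le) (by positivity)) hq1
      have := hk ⟨q, by exact_mod_cast hq0⟩ ((lt_div_iff₀ hj').1 hq2)
      rw [div_lt_iff₀ (by positivity)] at hq1
      exact absurd this (not_le.2 hq1)
    exact measure_eq_zero_iff_ae_notMem.2 this
  rw [hindep.measure_inter_preimage_eq_mul _ _ hA hB, mul_eq_zero] at hAB
  rcases hAB with h | h
  · left
    have hle : (fun ω => Z ω j) ≤ᵐ[μ] fun ω => Z ω i := by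
      have : ∀ᵐ ω ∂μ, ω ∉ Z ⁻¹' A := measure_eq_zero_iff_ae_notMem.1 h
      filter_upwards [this] with ω hω
      exact not_lt.1 hω
    exact (integral_eq_iff_of_ae_le (hZint j) (hZint i) hle).1 (by rw [hZmean, hZmean])
  · right
    rw [(aux_ident hZm hZ'm hid).measure_mem_eq hB] at h
    have : ∀ᵐ ω ∂μ, ω ∉ Z ⁻¹' B := measure_eq_zero_iff_ae_notMem.1 h
    filter_upwards [this, hn] with ω hω h
    exact le_antisymm (not_lt.1 hω) (mul_nonneg (h i) (h j))

end

/-- If no bivariate projection of a D-norm is the sup-norm, then the D-norm is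
idempotent iff it equals the L¹-norm. -/
theorem idempotent_iff_l1_of_no_complete_dependence {d : ℕ} (hd : 0 < d)
    {Ω : Type*} [MeasurableSpace Ω] (μ : Measure Ω) [IsProbabilityMeasure μ]
    (Z Z' : Ω → Fin d → ℝ) (hZm : Measurable Z) (hZ'm : Measurable Z')
    (hZnn : ∀ i, ∀ᵐ ω ∂μ, 0 ≤ Z ω i)
    (hZint : ∀ i, Integrable (fun ω => Z ω i) μ)
    (hZmean : ∀ i, ∫ ω, Z ω i ∂μ = 1)
    (hindep : IndepFun Z Z' μ) (hid : μ.map Z' = μ.map Z)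
    (hproj : ∀ i j : Fin d, i < j → ∃ x y : ℝ,
      (∫ ω, max (|x| * Z ω i) (|y| * Z ω j) ∂μ) ≠ max |x| |y|) :
    (∀ x : Fin d → ℝ,
      (∫ ω, ⨆ i, |x i| * (Z ω i * Z' ω i) ∂μ) = ∫ ω, ⨆ i, |x i| * Z ω i ∂μ) ↔
    (∀ x : Fin d → ℝ, (∫ ω, ⨆ i, |x i| * Z ω i ∂μ) = ∑ i, |x i|) := by
  have hn := ae_all_iff.2 hZnn
  have hn' := ae_all_iff.2 (aux_nonneg' hZm hZ'm hZnn hid)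
  constructor
  · intro H x
    have h0 : ∀ᵐ ω ∂μ, ∀ i j : Fin d, i < j → Z ω i * Z ω j = 0 := by
      rw [ae_all_iff]; intro i
      rw [ae_all_iff]; intro j
      by_cases hij : i < j
      · rcases aux_dichotomy hZm hZ'm hZnn hZint hZmean hindep hid H i j hij.ne with h | h
        · exfalso
          obtain ⟨a, b, hab⟩ := hproj i j hij
          apply hab
          have : ∫ ω, max (|a| * Z ω i) (|b| * Z ω j) ∂μ = ∫ ω, max |a| |b| * Z ω i ∂μ := by
            apply integral_congr_ae
            filter_upwards [h, hn] with ω h hn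
            simp only [h]
            rw [max_mul_of_nonneg _ _ (hn i)]
          rw [this, integral_const_mul, hZmean, mul_one]
        · filter_upwards [h] with ω h _ using h
      · exact Filter.Eventually.of_forall fun ω h => absurd h hij
    have : (∫ ω, ⨆ i, |x i| * Z ω i ∂μ) = ∫ ω, ∑ i, |x i| * Z ω i ∂μ := by
      apply integral_congr_ae
      filter_upwards [h0, hn] with ω h hn
      refine aux_sup_sum _ (fun k => mul_nonneg (abs_nonneg _) (hn k)) fun i j hij => ?_
      rw [mul_mul_mul_comm, h i j hij, mul_zero]
    rw [this, integral_finset_sum _ fun i _ => (hZint i).const_mul _]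
    simp [integral_const_mul, hZmean]
  · intro H x
    rw [H x]
    have h1 := H (fun _ => 1)
    simp only [abs_one, one_mul] at h1
    have hsum : ∫ ω, ∑ i, Z ω i ∂μ = ∑ i : Fin d, (1:ℝ) := by
      rw [integral_finset_sum _ fun i _ => hZint i]; simp [hZmean]
    rw [← hsum] at h1
    have hle : (fun ω => ⨆ i, Z ω i) ≤ᵐ[μ] fun ω => ∑ i, Z ω i := by
      filter_upwards [hn] with ω h using aux_sup_le_sum_s12 _ h
    have hsi : Integrable (fun ω => ∑ i, Z ω i) μ := integrable_finset_sum _ fun i _ => hZint i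
    have hsup : Integrable (fun ω => ⨆ i, Z ω i) μ := by
      refine hsi.mono' ?_ ?_
      · exact (Measurable.iSup fun i => (measurable_pi_apply i).comp hZm).aestronglyMeasurable
      · filter_upwards [hn, hle] with ω h h2
        rw [Real.norm_of_nonneg (Real.iSup_nonneg h)]
        exact h2
    have heq := (integral_eq_iff_of_ae_le hsup hsi hle).1 h1
    have : (∫ ω, ⨆ i, |x i| * (Z ω i * Z' ω i) ∂μ)
        = ∫ ω, ∑ i, |x i| * (Z ω i * Z' ω i) ∂μ := by
      apply integral_congr_ae
      filter_upwards [heq, hn, hn'] with ω h hn hn'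
      refine aux_sup_sum _ (fun k => mul_nonneg (abs_nonneg _) (mul_nonneg (hn k) (hn' k)))
        fun i j hij => ?_
      have := aux_sum_sup _ hn h i j hij
      calc _ = (|x i| * |x j| * (Z' ω i * Z' ω j)) * (Z ω i * Z ω j) := by ring
        _ = 0 := by rw [this, mul_zero]
    have hp := fun i => aux_prod hZm hZ'm hZint hZmean hindep hid i (fun z => z i)
      (measurable_pi_apply i) (hZint i)
    rw [this, integral_finset_sum _ fun i _ => (hp i).1.const_mul _]
    refine Finset.sum_congr rfl fun i _ => ?_
    rw [integral_const_mul, (hp i).2, hZmean, mul_one]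
end

section
/- Let ‖·‖_D be an idempotent D-norm on ℝ^d, generated by Z with independent copy Z', whose complete dependence frame A_1, …, A_K is nonempty; i.e. A_1, …, A_K are nonempty pairwise disjoint subsets of {1, …, d} with |A_k| ≥ 2 for each k, 1 ≤ K < d, such that for each k and all i, j ∈ A_k the bivariate projection satisfies E(max(|x| Z_i, |y| Z_j)) = max(|x|, |y|) for all (x,y) ∈ ℝ², while for every pair i ≠ j not contained in a common A_k there exists (x,y) ∈ ℝ² with E(max(|x| Z_i, |y| Z_j)) ≠ max(|x|, |y|). Then ‖x‖_D = Σ_{k=1}^K max_{i ∈ A_k} |x_i| + Σ_{i ∈ {1,…,d} \ (A_1 ∪ … ∪ A_K)} |x_i| for all x ∈ ℝ^d. -/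
open MeasureTheory ProbabilityTheory


lemma aux_min_int {Ω : Type*} [MeasurableSpace Ω] {μ : Measure Ω} {f g : Ω → ℝ}
    (hf : Integrable f μ) (hg : Integrable g μ) :
    ∫ ω, min (f ω) (g ω) ∂μ = ∫ ω, f ω ∂μ + ∫ ω, g ω ∂μ - ∫ ω, max (f ω) (g ω) ∂μ := by
  have h1 : Integrable (fun ω => max (f ω) (g ω)) μ := hf.sup hg
  have h2 : Integrable (fun ω => min (f ω) (g ω)) μ := hf.inf hg
  rw [← integral_add hf hg, eq_sub_iff_add_eq, ← integral_add h2 h1]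
  exact integral_congr_ae (Filter.Eventually.of_forall fun ω => min_add_max _ _)

lemma aux_biv {Ω : Type*} [MeasurableSpace Ω] (μ : Measure Ω) [IsProbabilityMeasure μ]
    (X Y : Ω → ℝ) (hXm : Measurable X) (hYm : Measurable Y)
    (hX0 : ∀ᵐ ω ∂μ, 0 ≤ X ω) (hY0 : ∀ᵐ ω ∂μ, 0 ≤ Y ω)
    (hXi : Integrable X μ) (hYi : Integrable Y μ)
    (hX1 : ∫ ω, X ω ∂μ = 1) (hY1 : ∫ ω, Y ω ∂μ = 1)
    (hid : ∀ a b : ℝ, 0 ≤ a → 0 ≤ b →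
      ∫ p : Ω × Ω, min (a * (X p.1 * X p.2)) (b * (Y p.1 * Y p.2)) ∂(μ.prod μ)
        = ∫ ω, min (a * X ω) (b * Y ω) ∂μ)
    (hne : ¬ X =ᵐ[μ] Y) : ∀ᵐ ω ∂μ, min (X ω) (Y ω) = 0 := by
  set s : Ω → ℝ := fun ω => √(X ω) * √(Y ω) with hs
  have hsm : Measurable s := hXm.sqrt.mul hYm.sqrt
  have hsi : Integrable s μ := by
    refine (hXi.add hYi).mono' hsm.aestronglyMeasurable ?_
    filter_upwards [hX0, hY0] with ω h1 h2
    have e : 0 ≤ s ω := by positivity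
    rw [Real.norm_of_nonneg e]
    simp only [hs, Pi.add_apply]
    nlinarith [Real.sq_sqrt h1, Real.sq_sqrt h2, sq_nonneg (√(X ω) - √(Y ω))]
  set r := ∫ ω, s ω ∂μ with hr
  have hr0 : 0 ≤ r := integral_nonneg fun ω => by positivity
  have hr1 : r < 1 := by
    by_contra! hcon
    have hqi : Integrable (fun ω => X ω + Y ω - 2 * s ω) μ := (hXi.add hYi).sub (hsi.const_mul 2)
    have hq0 : ∀ᵐ ω ∂μ, 0 ≤ X ω + Y ω - 2 * s ω := by
      filter_upwards [hX0, hY0] with ω h1 h2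
      simp only [hs]
      nlinarith [Real.sq_sqrt h1, Real.sq_sqrt h2, sq_nonneg (√(X ω) - √(Y ω))]
    have hqe : ∫ ω, (X ω + Y ω - 2 * s ω) ∂μ = 2 - 2 * r := by
      have hai : Integrable (fun ω => X ω + Y ω) μ := hXi.add hYi
      rw [integral_sub hai (hsi.const_mul 2), integral_add hXi hYi, integral_const_mul,
        hX1, hY1]
      norm_num [hr]
    have hq : ∫ ω, (X ω + Y ω - 2 * s ω) ∂μ = 0 :=
      le_antisymm (by linarith) (integral_nonneg_of_ae hq0)
    rw [integral_eq_zero_iff_of_nonneg_ae hq0 hqi] at hq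
    apply hne
    filter_upwards [hq, hX0, hY0] with ω h h1 h2
    simp only [hs, Pi.zero_apply] at h
    have h3 : (√(X ω) - √(Y ω)) ^ 2 = 0 := by
      nlinarith [Real.sq_sqrt h1, Real.sq_sqrt h2]
    have h4 : √(X ω) = √(Y ω) := by
      have := pow_eq_zero_iff (two_ne_zero) |>.1 h3
      linarith
    exact (Real.sqrt_inj h1 h2).1 h4
  have hmi : ∀ a b : ℝ, Integrable (fun ω => min (a * X ω) (b * Y ω)) μ := fun a b =>
    (hXi.const_mul a).inf (hYi.const_mul b)
  have key : ∀ n : ℕ, ∀ a b : ℝ, 0 ≤ a → 0 ≤ b →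
      ∫ ω, min (a * X ω) (b * Y ω) ∂μ ≤ r ^ (n + 1) * (√a * √b) := by
    intro n
    induction n with
    | zero =>
      intro a b ha hb
      have : r ^ (0 + 1) * (√a * √b) = ∫ ω, (√a * √b) * s ω ∂μ := by
        rw [integral_const_mul, ← hr]; ring
      rw [this]
      refine integral_mono_ae (hmi a b) (hsi.const_mul _) ?_
      filter_upwards [hX0, hY0] with ω h1 h2
      have e : √a * √b * s ω = √(a * X ω) * √(b * Y ω) := by
        rw [Real.sqrt_mul ha, Real.sqrt_mul hb]; simp only [hs]; ring
      show min (a * X ω) (b * Y ω) ≤ √a * √b * s ω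
      rw [e]
      have p1 : 0 ≤ a * X ω := mul_nonneg ha h1
      have p2 : 0 ≤ b * Y ω := mul_nonneg hb h2
      rcases le_total (a * X ω) (b * Y ω) with h | h
      · rw [min_eq_left h]
        nlinarith [Real.sqrt_le_sqrt h, Real.sq_sqrt p1, Real.sqrt_nonneg (a * X ω)]
      · rw [min_eq_right h]
        nlinarith [Real.sqrt_le_sqrt h, Real.sq_sqrt p2, Real.sqrt_nonneg (b * Y ω)]
    | succ n ih =>
      intro a b ha hb
      rw [← hid a b ha hb]
      have hpi : Integrable (fun p : Ω × Ω =>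
          min (a * (X p.1 * X p.2)) (b * (Y p.1 * Y p.2))) (μ.prod μ) :=
        ((hXi.mul_prod hXi).const_mul a).inf ((hYi.mul_prod hYi).const_mul b)
      rw [integral_prod _ hpi]
      have : r ^ (n + 1 + 1) * (√a * √b) = ∫ ω, (r ^ (n + 1) * (√a * √b)) * s ω ∂μ := by
        rw [integral_const_mul, ← hr]; ring
      rw [this]
      refine integral_mono_ae hpi.integral_prod_left (hsi.const_mul _) ?_
      filter_upwards [hX0, hY0] with ω h1 h2
      have h := ih (a * X ω) (b * Y ω) (mul_nonneg ha h1) (mul_nonneg hb h2)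
      rw [Real.sqrt_mul ha, Real.sqrt_mul hb] at h
      simp only [mul_assoc] at h ⊢
      refine h.trans (le_of_eq ?_)
      simp only [hs]; ring
  have hlim : ∫ ω, min (1 * X ω) (1 * Y ω) ∂μ ≤ 0 := by
    have ht : Filter.Tendsto (fun n : ℕ => r ^ (n + 1)) Filter.atTop (nhds 0) :=
      (tendsto_pow_atTop_nhds_zero_of_lt_one hr0 hr1).comp (Filter.tendsto_add_atTop_nat 1)
    refine ge_of_tendsto' ht fun n => ?_
    simpa using key n 1 1 zero_le_one zero_le_one
  simp only [one_mul] at hlim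
  have h0 : ∀ᵐ ω ∂μ, 0 ≤ min (X ω) (Y ω) := by
    filter_upwards [hX0, hY0] with ω h1 h2 using le_min h1 h2
  have hz := le_antisymm hlim (integral_nonneg_of_ae h0)
  rw [integral_eq_zero_iff_of_nonneg_ae h0 (hXi.inf hYi)] at hz
  exact hz

lemma aux_sup {d : ℕ} (i j : Fin d) (hij : i ≠ j) (a b : ℝ) (ha : 0 ≤ a) (hb : 0 ≤ b)
    (u : Fin d → ℝ) (hu : ∀ i, 0 ≤ u i) :
    (⨆ l, |(if l = i then a else if l = j then b else 0 : ℝ)| * u l) =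
      max (a * u i) (b * u j) := by
  haveI : Nonempty (Fin d) := ⟨i⟩
  apply le_antisymm
  · refine ciSup_le fun l => ?_
    split_ifs with h1 h2
    · subst h1; rw [abs_of_nonneg ha]; exact le_max_left _ _
    · subst h2; rw [abs_of_nonneg hb]; exact le_max_right _ _
    · simpa using Or.inl (mul_nonneg ha (hu i))
  · have hbd : BddAbove (Set.range fun l =>
      |(if l = i then a else if l = j then b else 0 : ℝ)| * u l) := Set.finite_range _ |>.bddAbove
    refine max_le ?_ ?_
    · refine le_trans (le_of_eq ?_) (le_ciSup hbd i)
      simp [abs_of_nonneg ha]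
    · refine le_trans (le_of_eq ?_) (le_ciSup hbd j)
      simp [abs_of_nonneg hb, hij.symm]

lemma aux_bsup {d : ℕ} (S : Finset (Fin d)) (hS : S.Nonempty) (x : Fin d → ℝ) :
    (∀ i ∈ S, |x i| ≤ ⨆ i ∈ S, |x i|) ∧ ∃ i ∈ S, (⨆ i ∈ S, |x i|) = |x i| := by
  obtain ⟨i0, hi0⟩ := hS
  haveI : Nonempty (Fin d) := ⟨i0⟩
  have hle : ∀ i ∈ S, |x i| ≤ ⨆ i ∈ S, |x i| := by
    intro i hi
    have hbd : BddAbove (Set.range fun i => ⨆ (_ : i ∈ S), |x i|) := Set.finite_range _ |>.bddAbove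
    refine le_trans (le_of_eq ?_) (le_ciSup hbd i)
    rw [ciSup_pos hi]
  refine ⟨hle, ?_⟩
  obtain ⟨m, hm⟩ := exists_eq_ciSup_of_finite (f := fun i => ⨆ (_ : i ∈ S), |x i|)
  by_cases hmS : m ∈ S
  · refine ⟨m, hmS, ?_⟩
    rw [← hm]
    simp only [ciSup_pos hmS]
  · refine ⟨i0, hi0, le_antisymm ?_ (hle i0 hi0)⟩
    rw [← hm]
    simp [hmS]

lemma aux_pt_s13 {d K : ℕ} (hd : 0 < d) (A : Fin K → Finset (Fin d)) (z x : Fin d → ℝ)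
    (hz : ∀ i, 0 ≤ z i) (q : Fin K → Fin d) (hq : ∀ k, q k ∈ A k)
    (hAdisj : ∀ k l, k ≠ l → Disjoint (A k) (A l))
    (heq : ∀ k, ∀ i ∈ A k, ∀ j ∈ A k, z i = z j)
    (hmin : ∀ i j, i ≠ j → (¬ ∃ k, i ∈ A k ∧ j ∈ A k) → min (z i) (z j) = 0) :
    (⨆ i, |x i| * z i) = (∑ k : Fin K, (⨆ i ∈ A k, |x i|) * z (q k)) +
          ∑ i ∈ Finset.univ \ Finset.univ.biUnion A, |x i| * z i := by
  haveI : Nonempty (Fin d) := ⟨⟨0, hd⟩⟩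
  have hS := fun k => aux_bsup (A k) ⟨q k, hq k⟩ x
  have hS0 : ∀ k, 0 ≤ ⨆ i ∈ A k, |x i| := fun k => (abs_nonneg _).trans ((hS k).1 _ (hq k))
  have hbd : BddAbove (Set.range fun i => |x i| * z i) := Set.finite_range _ |>.bddAbove
  have hsup : ∀ i, |x i| * z i ≤ ⨆ i, |x i| * z i := fun i => le_ciSup hbd i
  have n1 : 0 ≤ ∑ k : Fin K, (⨆ i ∈ A k, |x i|) * z (q k) :=
    Finset.sum_nonneg fun k _ => mul_nonneg (hS0 k) (hz _)
  have n2 : 0 ≤ ∑ i ∈ Finset.univ \ Finset.univ.biUnion A, |x i| * z i :=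
    Finset.sum_nonneg fun i _ => mul_nonneg (abs_nonneg _) (hz _)
  have hzero : ∀ i j, i ≠ j → (¬ ∃ k, i ∈ A k ∧ j ∈ A k) → 0 < z i → z j = 0 := by
    intro i j h1 h2 h3
    have := hmin i j h1 h2
    rcases min_choice (z i) (z j) with h | h <;> linarith
  have hdis : ∀ {i k l}, i ∈ A k → i ∈ A l → k = l := by
    intro i k l h1 h2
    by_contra hkl
    exact Finset.disjoint_left.1 (hAdisj k l hkl) h1 h2
  apply le_antisymm
  · refine ciSup_le fun i => ?_
    by_cases hi : ∃ k, i ∈ A k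
    · obtain ⟨k, hk⟩ := hi
      have h1 : |x i| * z i ≤ (⨆ i ∈ A k, |x i|) * z (q k) := by
        rw [heq k i hk (q k) (hq k)]
        exact mul_le_mul_of_nonneg_right ((hS k).1 i hk) (hz _)
      have h2 := Finset.single_le_sum (f := fun k : Fin K => (⨆ i ∈ A k, |x i|) * z (q k))
        (fun k _ => mul_nonneg (hS0 k) (hz _)) (Finset.mem_univ k)
      linarith
    · have hm : i ∈ Finset.univ \ Finset.univ.biUnion A := by
        simpa using hi
      have h2 := Finset.single_le_sum (f := fun i => |x i| * z i)
        (fun k _ => mul_nonneg (abs_nonneg _) (hz _)) hm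
      linarith
  · by_cases hk : ∃ k, 0 < z (q k)
    · obtain ⟨k, hk⟩ := hk
      rw [Finset.sum_eq_single k, Finset.sum_eq_zero, add_zero]
      · obtain ⟨i, hi, he⟩ := (hS k).2
        rw [he, heq k (q k) (hq k) i hi]
        exact hsup i
      · intro i hi
        have hi' : ∀ k, i ∉ A k := by simpa using hi
        rw [hzero (q k) i (fun h => hi' k (h ▸ hq k)) (fun ⟨l, _, h⟩ => hi' l h) hk, mul_zero]
      · intro l _ hl
        rw [hzero (q k) (q l) (fun h => hl (hdis (hq l) (h ▸ hq k)))
          (fun ⟨m, h1, h2⟩ => hl ((hdis (hq l) h2).trans (hdis (hq k) h1).symm)) hk, mul_zero]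
      · simp
    · have hk' : ∀ k, z (q k) = 0 := fun k =>
        le_antisymm (not_lt.1 fun h => hk ⟨k, h⟩) (hz _)
      rw [Finset.sum_eq_zero (fun k _ => by rw [hk' k, mul_zero]), zero_add]
      by_cases hi : ∃ i ∈ Finset.univ \ Finset.univ.biUnion A, 0 < z i
      · obtain ⟨i, hi, hp⟩ := hi
        have hi' : ∀ k, i ∉ A k := by simpa using hi
        rw [Finset.sum_eq_single_of_mem i hi]
        · exact hsup i
        · intro j _ hj
          rw [hzero i j hj.symm (fun ⟨l, h, _⟩ => hi' l h) hp, mul_zero]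
      · rw [Finset.sum_eq_zero]
        · exact (mul_nonneg (abs_nonneg _) (hz _)).trans (hsup ⟨0, hd⟩)
        · intro i h
          rw [le_antisymm (not_lt.1 fun h' => hi ⟨i, h, h'⟩) (hz i), mul_zero]

/-- An idempotent D-norm with nonempty complete dependence frame `A₁, …, A_K` is the
corresponding mixture of sup-norms and the L¹-norm. -/
theorem idempotent_dNorm_with_CDF {d K : ℕ} (hd : 0 < d) (hK : 1 ≤ K) (hKd : K < d)
    {Ω : Type*} [MeasurableSpace Ω] (μ : Measure Ω) [IsProbabilityMeasure μ]
    (Z Z' : Ω → Fin d → ℝ) (hZm : Measurable Z) (hZ'm : Measurable Z')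
    (hZnn : ∀ i, ∀ᵐ ω ∂μ, 0 ≤ Z ω i)
    (hZint : ∀ i, Integrable (fun ω => Z ω i) μ)
    (hZmean : ∀ i, ∫ ω, Z ω i ∂μ = 1)
    (hindep : IndepFun Z Z' μ) (hid : μ.map Z' = μ.map Z)
    (A : Fin K → Finset (Fin d))
    (hAcard : ∀ k, 2 ≤ (A k).card)
    (hAdisj : ∀ k l, k ≠ l → Disjoint (A k) (A l))
    (hdep : ∀ k, ∀ i ∈ A k, ∀ j ∈ A k, ∀ x y : ℝ,
      (∫ ω, max (|x| * Z ω i) (|y| * Z ω j) ∂μ) = max |x| |y|)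
    (hnodep : ∀ i j : Fin d, i ≠ j → (¬ ∃ k, i ∈ A k ∧ j ∈ A k) →
      ∃ x y : ℝ, (∫ ω, max (|x| * Z ω i) (|y| * Z ω j) ∂μ) ≠ max |x| |y|)
    (hidem : ∀ x : Fin d → ℝ,
      (∫ ω, ⨆ i, |x i| * (Z ω i * Z' ω i) ∂μ) = ∫ ω, ⨆ i, |x i| * Z ω i ∂μ) :
    ∀ x : Fin d → ℝ,
      (∫ ω, ⨆ i, |x i| * Z ω i ∂μ) =
        (∑ k : Fin K, ⨆ i ∈ A k, |x i|) +
          ∑ i ∈ Finset.univ \ Finset.univ.biUnion A, |x i| := by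
  intro x
  have hm : ∀ i, Measurable fun ω => Z ω i := fun i => (measurable_pi_apply i).comp hZm
  have hnn : ∀ᵐ ω ∂μ, ∀ i, 0 ≤ Z ω i := ae_all_iff.2 hZnn
  -- transfer idempotency to the product space
  have hmap : μ.map (fun ω => (Z ω, Z' ω)) =
      (μ.prod μ).map (fun p : Ω × Ω => (Z p.1, Z p.2)) := by
    rw [(indepFun_iff_map_prod_eq_prod_map_map hZm.aemeasurable hZ'm.aemeasurable).1 hindep, hid,
      Measure.map_prod_map _ _ hZm hZm]
    rfl
  have hidp : ∀ x : Fin d → ℝ,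
      (∫ p : Ω × Ω, ⨆ i, |x i| * (Z p.1 i * Z p.2 i) ∂(μ.prod μ)) =
        ∫ ω, ⨆ i, |x i| * Z ω i ∂μ := by
    intro x
    rw [← hidem x]
    have hF : Measurable (fun w : (Fin d → ℝ) × (Fin d → ℝ) => ⨆ i, |x i| * (w.1 i * w.2 i)) := by
      refine Measurable.iSup fun i => ?_
      fun_prop
    have h1 := integral_map (μ := μ) (φ := fun ω => (Z ω, Z' ω)) (hZm.prodMk hZ'm).aemeasurable
      hF.aestronglyMeasurable
    have h2 := integral_map (μ := μ.prod μ) (φ := fun p : Ω × Ω => (Z p.1, Z p.2))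
      ((hZm.comp measurable_fst).prodMk (hZm.comp measurable_snd)).aemeasurable
      hF.aestronglyMeasurable
    rw [hmap] at h1
    exact h2.symm.trans h1
  have hnnp : ∀ᵐ p ∂(μ.prod μ), ∀ i, 0 ≤ Z p.1 i * Z p.2 i := by
    have h1 : ∀ᵐ p ∂(μ.prod μ), ∀ i, 0 ≤ Z p.1 i := Measure.quasiMeasurePreserving_fst.ae hnn
    have h2 : ∀ᵐ p ∂(μ.prod μ), ∀ i, 0 ≤ Z p.2 i := Measure.quasiMeasurePreserving_snd.ae hnn
    filter_upwards [h1, h2] with p h1 h2 i using mul_nonneg (h1 i) (h2 i)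
  have hmin : ∀ i j, i ≠ j → (¬ ∃ k, i ∈ A k ∧ j ∈ A k) →
      ∀ᵐ ω ∂μ, min (Z ω i) (Z ω j) = 0 := by
    intro i j hij hk
    refine aux_biv μ (fun ω => Z ω i) (fun ω => Z ω j) (hm i) (hm j) (hZnn i) (hZnn j)
      (hZint i) (hZint j) (hZmean i) (hZmean j) ?_ ?_
    · intro a b ha hb
      have hpi : ∀ l, Integrable (fun p : Ω × Ω => Z p.1 l * Z p.2 l) (μ.prod μ) := fun l =>
        (hZint l).mul_prod (hZint l)
      have hpe : ∀ l, ∫ p : Ω × Ω, Z p.1 l * Z p.2 l ∂(μ.prod μ) = 1 := fun l => by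
        rw [integral_prod_mul (fun ω => Z ω l) (fun ω => Z ω l), hZmean, one_mul]
      rw [aux_min_int ((hpi i).const_mul a) ((hpi j).const_mul b),
        aux_min_int ((hZint i).const_mul a) ((hZint j).const_mul b)]
      simp only [integral_const_mul, hpe, hZmean]
      congr 1
      have h := hidp (fun l => if l = i then a else if l = j then b else 0)
      rw [integral_congr_ae (g := fun p : Ω × Ω =>
          max (a * (Z p.1 i * Z p.2 i)) (b * (Z p.1 j * Z p.2 j))) ?_,
        integral_congr_ae (g := fun ω => max (a * Z ω i) (b * Z ω j)) ?_] at h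
      · exact h
      · filter_upwards [hnn] with ω h using aux_sup i j hij a b ha hb _ h
      · filter_upwards [hnnp] with p h using
          aux_sup i j hij a b ha hb (fun l => Z p.1 l * Z p.2 l) h
    · intro he
      obtain ⟨a, b, hab⟩ := hnodep i j hij hk
      apply hab
      rw [integral_congr_ae (g := fun ω => max |a| |b| * Z ω i), integral_const_mul, hZmean,
        mul_one]
      filter_upwards [he, hZnn i] with ω h h0
      rw [← h, max_mul_of_nonneg _ _ h0]
  have hle : ∀ k, ∀ i ∈ A k, ∀ j ∈ A k, ∀ᵐ ω ∂μ, Z ω j ≤ Z ω i := by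
    intro k i hi j hj
    have h := hdep k i hi j hj 1 1
    simp only [abs_one, one_mul, max_self] at h
    have hsi : Integrable (fun ω => max (Z ω i) (Z ω j)) μ := (hZint i).sup (hZint j)
    have h0 : ∀ᵐ ω ∂μ, 0 ≤ max (Z ω i) (Z ω j) - Z ω i :=
      Filter.Eventually.of_forall fun ω => sub_nonneg.2 (le_max_left _ _)
    have hz : ∫ ω, (max (Z ω i) (Z ω j) - Z ω i) ∂μ = 0 := by
      rw [integral_sub hsi (hZint i), h, hZmean, sub_self]
    rw [integral_eq_zero_iff_of_nonneg_ae h0 (hsi.sub (hZint i))] at hz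
    filter_upwards [hz] with ω h
    have h' : max (Z ω i) (Z ω j) - Z ω i = 0 := h
    have := le_max_right (Z ω i) (Z ω j)
    linarith
  have hne : ∀ k, ∃ i, i ∈ A k := fun k =>
    Finset.card_pos.1 (lt_of_lt_of_le two_pos (hAcard k))
  choose q hq using hne
  have hmin' : ∀ᵐ ω ∂μ, ∀ i j, i ≠ j → (¬ ∃ k, i ∈ A k ∧ j ∈ A k) →
      min (Z ω i) (Z ω j) = 0 := by
    refine ae_all_iff.2 fun i => ae_all_iff.2 fun j => ?_
    by_cases h : i ≠ j ∧ ¬ ∃ k, i ∈ A k ∧ j ∈ A k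
    · filter_upwards [hmin i j h.1 h.2] with ω hω _ _ using hω
    · exact Filter.Eventually.of_forall fun ω h1 h2 => absurd ⟨h1, h2⟩ h
  have hle' : ∀ᵐ ω ∂μ, ∀ k i j, i ∈ A k → j ∈ A k → Z ω j ≤ Z ω i := by
    refine ae_all_iff.2 fun k => ae_all_iff.2 fun i => ae_all_iff.2 fun j => ?_
    by_cases h : i ∈ A k ∧ j ∈ A k
    · filter_upwards [hle k i h.1 j h.2] with ω hω _ _ using hω
    · exact Filter.Eventually.of_forall fun ω h1 h2 => absurd ⟨h1, h2⟩ h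
  rw [integral_congr_ae (g := fun ω => (∑ k : Fin K, (⨆ i ∈ A k, |x i|) * Z ω (q k)) +
          ∑ i ∈ Finset.univ \ Finset.univ.biUnion A, |x i| * Z ω i) ?_]
  · rw [integral_add (integrable_finsetSum _ fun k _ => (hZint _).const_mul _)
      (integrable_finsetSum _ fun k _ => (hZint _).const_mul _),
      integral_finsetSum _ fun k _ => (hZint _).const_mul _,
      integral_finsetSum _ fun k _ => (hZint _).const_mul _]
    simp only [integral_const_mul, hZmean, mul_one]
  · filter_upwards [hnn, hmin', hle'] with ω h1 h2 h3
    exact aux_pt_s13 hd A (Z ω) x h1 q hq hAdisj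
      (fun k i hi j hj => le_antisymm (h3 k j i hj hi) (h3 k i j hi hj)) h2
end

section
/- Let A_1, …, A_K be nonempty pairwise disjoint subsets of {1, …, d} with |A_k| ≥ 2 for each k and 1 ≤ K < d. Then the function N(x) := Σ_{k=1}^K max_{i ∈ A_k} |x_i| + Σ_{i ∈ {1,…,d} \ (A_1 ∪ … ∪ A_K)} |x_i| is an idempotent D-norm on ℝ^d: there exists a probability space carrying a generator Z with E(max_{1≤i≤d} |x_i| Z_i) = N(x) for all x ∈ ℝ^d, and for Z' an independent copy of Z, E(max_{1≤i≤d} |x_i| Z_i Z'_i) = N(x) for all x ∈ ℝ^d. -/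
open MeasureTheory ProbabilityTheory

theorem aux_class {d K : ℕ} (A : Fin K → Finset (Fin d))
    (hAdisj : ∀ k l, k ≠ l → Disjoint (A k) (A l)) :
    ∃ c : Fin d → Fin K ⊕ (Finset.univ \ Finset.univ.biUnion A : Finset (Fin d)),
      (∀ i k, c i = Sum.inl k ↔ i ∈ A k) ∧ (∀ i j, c i = Sum.inr j ↔ i = j.1) := by
  classical
  have key : ∀ i, ∃ y : Fin K ⊕ (Finset.univ \ Finset.univ.biUnion A : Finset (Fin d)),
      (∀ k, y = Sum.inl k ↔ i ∈ A k) ∧ (∀ j, y = Sum.inr j ↔ i = j.1) := by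
    intro i
    by_cases h : ∃ k, i ∈ A k
    · obtain ⟨k, hk⟩ := h
      refine ⟨Sum.inl k, fun l => ?_, fun j => ?_⟩
      · constructor
        · intro e
          cases e
          exact hk
        · intro hl
          by_contra hne
          have hkl : k ≠ l := fun e => hne (by rw [e])
          exact Finset.disjoint_left.mp (hAdisj k l hkl) hk hl
      · constructor
        · intro e
          cases e
        · intro e
          have := j.2
          simp only [Finset.mem_sdiff, Finset.mem_biUnion, Finset.mem_univ, true_and] at this
          exact absurd ⟨k, e ▸ hk⟩ this
    · refine ⟨Sum.inr ⟨i, by simpa using h⟩, fun l => ?_, fun j => ?_⟩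
      · constructor
        · intro e
          cases e
        · intro e
          exact absurd ⟨l, e⟩ h
      · simp [Subtype.ext_iff]
  choose c h1 h2 using key
  exact ⟨c, h1, h2⟩

theorem aux_sum {d K : ℕ} (hd : 0 < d) (A : Fin K → Finset (Fin d))
    (c : Fin d → Fin K ⊕ (Finset.univ \ Finset.univ.biUnion A : Finset (Fin d)))
    (h1 : ∀ i k, c i = Sum.inl k ↔ i ∈ A k) (h2 : ∀ i j, c i = Sum.inr j ↔ i = j.1)
    (x : Fin d → ℝ) :
    ∑ a, (⨆ i, |x i| * (if c i = a then (1:ℝ) else 0)) =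
      (∑ k : Fin K, ⨆ i ∈ A k, |x i|) +
              ∑ i ∈ Finset.univ \ Finset.univ.biUnion A, |x i| := by
  have : Nonempty (Fin d) := ⟨⟨0, hd⟩⟩
  rw [Fintype.sum_sum_type]
  congr 1
  · refine Finset.sum_congr rfl fun k _ => ?_
    refine iSup_congr fun i => ?_
    by_cases h : i ∈ A k <;> simp [h1, h]
  · rw [← Finset.sum_coe_sort (Finset.univ \ Finset.univ.biUnion A)]
    refine Finset.sum_congr rfl fun j _ => ?_
    apply le_antisymm
    · refine ciSup_le fun i => ?_
      by_cases h : i = j.1 <;> simp [h2, h]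
    · have := le_ciSup (f := fun i => |x i| * (if c i = Sum.inr j then (1:ℝ) else 0))
        (Set.finite_range _).bddAbove j.1
      simpa [h2] using this

theorem aux_int {J : Type} [Fintype J] [MeasurableSpace J] [MeasurableSingletonClass J]
    (f : J → ℝ) :
    ∫ a, f a ∂(((Fintype.card J : ENNReal)⁻¹) • (Measure.count : Measure J)) =
      (Fintype.card J : ℝ)⁻¹ * ∑ a, f a := by
  rw [integral_smul_measure, integral_count]
  simp

/-- For any nonempty pairwise disjoint sets `A₁, …, A_K` with `|A_k| ≥ 2`, the mixture
of sup-norms and the L¹-norm is an idempotent D-norm on `ℝ^d`. -/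
theorem mixture_is_idempotent_dNorm {d K : ℕ} (hd : 0 < d) (hK : 1 ≤ K) (hKd : K < d)
    (A : Fin K → Finset (Fin d))
    (hAcard : ∀ k, 2 ≤ (A k).card)
    (hAdisj : ∀ k l, k ≠ l → Disjoint (A k) (A l)) :
    ∃ (Ω : Type) (_ : MeasurableSpace Ω) (μ : Measure Ω),
      IsProbabilityMeasure μ ∧
      ∃ Z Z' : Ω → Fin d → ℝ,
        Measurable Z ∧ Measurable Z' ∧
        (∀ i, ∀ᵐ ω ∂μ, 0 ≤ Z ω i) ∧
        (∀ i, Integrable (fun ω => Z ω i) μ) ∧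
        (∀ i, ∫ ω, Z ω i ∂μ = 1) ∧
        IndepFun Z Z' μ ∧ μ.map Z' = μ.map Z ∧
        (∀ x : Fin d → ℝ,
          (∫ ω, ⨆ i, |x i| * Z ω i ∂μ) =
            (∑ k : Fin K, ⨆ i ∈ A k, |x i|) +
              ∑ i ∈ Finset.univ \ Finset.univ.biUnion A, |x i|) ∧
        (∀ x : Fin d → ℝ,
          (∫ ω, ⨆ i, |x i| * (Z ω i * Z' ω i) ∂μ) =
            (∑ k : Fin K, ⨆ i ∈ A k, |x i|) +
              ∑ i ∈ Finset.univ \ Finset.univ.biUnion A, |x i|) := by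
  have : Nonempty (Fin d) := ⟨⟨0, hd⟩⟩
  obtain ⟨c, h1, h2⟩ := aux_class A hAdisj
  obtain ⟨J, iF, iD, c, hsum⟩ : ∃ (J : Type) (_ : Fintype J) (_ : DecidableEq J)
      (c : Fin d → J), ∀ x : Fin d → ℝ,
      ∑ a, (⨆ i, |x i| * (if c i = a then (1:ℝ) else 0)) =
      (∑ k : Fin K, ⨆ i ∈ A k, |x i|) +
              ∑ i ∈ Finset.univ \ Finset.univ.biUnion A, |x i| :=
    ⟨_, inferInstance, inferInstance, c, aux_sum hd A c h1 h2⟩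
  letI : MeasurableSpace J := ⊤
  have : MeasurableSingletonClass J := ⟨fun _ => trivial⟩
  have : Nonempty J := ⟨c ⟨0, hd⟩⟩
  have hn0 : (Fintype.card J : ℝ) ≠ 0 := by exact_mod_cast Fintype.card_ne_zero
  have hint := aux_int (J := J)
  set n : ℝ := (Fintype.card J : ℝ) with hn
  have hnn : 0 ≤ n := by positivity
  set ν : Measure J := ((Fintype.card J : ENNReal)⁻¹) • (Measure.count : Measure J) with hν
  have hprob : IsProbabilityMeasure ν := ⟨by
    simp only [hν, Measure.smul_apply, smul_eq_mul, Measure.count_univ, ENat.card_eq_coe_fintype_card]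
    exact ENNReal.inv_mul_cancel (by simp) (by simp)⟩
  let g : J → Fin d → ℝ := fun a i => if c i = a then n else 0
  have hg : Measurable g := measurable_from_top
  have hfst : ∀ f : J → ℝ, ∫ ω, f ω.1 ∂(ν.prod ν) = n⁻¹ * ∑ a, f a := by
    intro f
    rw [integral_fun_fst, hint]
    simp
  refine ⟨J × J, inferInstance, ν.prod ν, inferInstance, fun ω => g ω.1, fun ω => g ω.2,
    hg.comp measurable_fst, hg.comp measurable_snd, ?_, ?_, ?_, ?_, ?_, ?_, ?_⟩
  · intro i
    refine Filter.Eventually.of_forall fun ω => ?_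
    simp only [g]
    split_ifs <;> simp [hnn]
  · intro i
    exact Integrable.of_finite
  · intro i
    rw [hfst (fun a => g a i)]
    simp [g, hn0]
  · exact indepFun_prod hg hg
  · have e1 : (ν.prod ν).map (fun ω => g ω.2) = ν.map g := by
      rw [← Function.comp_def g Prod.snd, ← Measure.map_map hg measurable_snd]
      simp
    have e2 : (ν.prod ν).map (fun ω => g ω.1) = ν.map g := by
      rw [← Function.comp_def g Prod.fst, ← Measure.map_map hg measurable_fst]
      simp
    rw [e1, e2]
  · intro x
    rw [hfst (fun a => ⨆ i, |x i| * g a i), ← hsum x, Finset.mul_sum]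
    refine Finset.sum_congr rfl fun a _ => ?_
    rw [Real.mul_iSup_of_nonneg (by positivity)]
    refine iSup_congr fun i => ?_
    by_cases h : c i = a <;> simp [g, h]
    field_simp
  · intro x
    rw [integral_prod _ Integrable.of_finite, hint, ← hsum x, Finset.mul_sum]
    refine Finset.sum_congr rfl fun a _ => ?_
    rw [hint, Finset.sum_eq_single a]
    · rw [← mul_assoc, Real.mul_iSup_of_nonneg (by positivity)]
      refine iSup_congr fun i => ?_
      by_cases h : c i = a <;> simp [g, h]
      field_simp
    · intro b _ hb
      have : ∀ i, |x i| * (g a i * g b i) = 0 := by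
        intro i
        by_cases h : c i = a
        · simp [g, h, hb.symm]
        · simp [g, h]
      simp [this]
    · simp
end

section
/- For arbitrary independent generators Z¹ and Z² on ℝ^d (on a common probability space), the product D-norm dominates both factors: E(max_{1≤i≤d} |x_i| Z¹_i Z²_i) ≥ max( E(max_{1≤i≤d} |x_i| Z¹_i), E(max_{1≤i≤d} |x_i| Z²_i) ) for all x ∈ ℝ^d. -/
open MeasureTheory ProbabilityTheory

lemma aux_int_iSup {d : ℕ} (hd : 0 < d) {α : Type*} [MeasurableSpace α] (ν : Measure α)
    (g : Fin d → α → ℝ) (hg : ∀ i, Integrable (g i) ν) :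
    Integrable (fun a => ⨆ i, g i a) ν := by
  haveI : Nonempty (Fin d) := ⟨⟨0, hd⟩⟩
  refine Integrable.mono' (g := fun a => ∑ i, |g i a|)
    (integrable_finset_sum _ fun i _ => (hg i).abs)
    (AEMeasurable.iSup fun i => (hg i).aemeasurable).aestronglyMeasurable
    (Filter.Eventually.of_forall fun a => ?_)
  obtain ⟨i, hi⟩ := exists_eq_ciSup_of_finite (f := fun i => g i a)
  rw [← hi, Real.norm_eq_abs]
  exact Finset.single_le_sum (f := fun i => |g i a|) (fun i _ => abs_nonneg _) (Finset.mem_univ i)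

lemma aux_dom {d : ℕ} (hd : 0 < d)
    {Ω : Type*} [MeasurableSpace Ω] (μ : Measure Ω) [IsProbabilityMeasure μ]
    (Z₁ Z₂ : Ω → Fin d → ℝ) (hZ₁m : Measurable Z₁) (hZ₂m : Measurable Z₂)
    (hZ₁int : ∀ i, Integrable (fun ω => Z₁ ω i) μ)
    (hZ₂int : ∀ i, Integrable (fun ω => Z₂ ω i) μ)
    (hZ₂mean : ∀ i, ∫ ω, Z₂ ω i ∂μ = 1)
    (hindep : IndepFun Z₁ Z₂ μ) (x : Fin d → ℝ) :
    ∫ ω, ⨆ i, |x i| * Z₁ ω i ∂μ ≤ ∫ ω, ⨆ i, |x i| * (Z₁ ω i * Z₂ ω i) ∂μ := by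
  haveI : Nonempty (Fin d) := ⟨⟨0, hd⟩⟩
  have h1 : ∀ i, Integrable (fun z : Fin d → ℝ => z i) (μ.map Z₁) := fun i =>
    (integrable_map_measure (measurable_pi_apply i).aestronglyMeasurable
      hZ₁m.aemeasurable).2 (hZ₁int i)
  have h2 : ∀ i, Integrable (fun z : Fin d → ℝ => z i) (μ.map Z₂) := fun i =>
    (integrable_map_measure (measurable_pi_apply i).aestronglyMeasurable
      hZ₂m.aemeasurable).2 (hZ₂int i)
  have m2 : ∀ i, ∫ z : Fin d → ℝ, z i ∂(μ.map Z₂) = 1 := fun i => by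
    rw [integral_map hZ₂m.aemeasurable (measurable_pi_apply i).aestronglyMeasurable]
    exact hZ₂mean i
  haveI := Measure.isProbabilityMeasure_map (μ := μ) hZ₁m.aemeasurable
  haveI := Measure.isProbabilityMeasure_map (μ := μ) hZ₂m.aemeasurable
  have hprod := (indepFun_iff_map_prod_eq_prod_map_map hZ₁m.aemeasurable hZ₂m.aemeasurable).1 hindep
  have hF : Integrable (fun p : (Fin d → ℝ) × (Fin d → ℝ) => ⨆ i, |x i| * (p.1 i * p.2 i))
      ((μ.map Z₁).prod (μ.map Z₂)) :=
    aux_int_iSup hd _ (fun i (p : (Fin d → ℝ) × (Fin d → ℝ)) => |x i| * (p.1 i * p.2 i))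
      fun i => ((h1 i).mul_prod (h2 i)).const_mul _
  have hS : Integrable (fun z : Fin d → ℝ => ⨆ i, |x i| * z i) (μ.map Z₁) :=
    aux_int_iSup hd _ (fun i (z : Fin d → ℝ) => |x i| * z i) fun i => (h1 i).const_mul _
  have eR : ∫ ω, ⨆ i, |x i| * (Z₁ ω i * Z₂ ω i) ∂μ
      = ∫ z, ∫ w, ⨆ i, |x i| * (z i * w i) ∂(μ.map Z₂) ∂(μ.map Z₁) := by
    rw [← integral_prod _ hF, ← hprod, integral_map (hZ₁m.prodMk hZ₂m).aemeasurable]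
    rw [hprod]; exact hF.aestronglyMeasurable
  have eL : ∫ ω, ⨆ i, |x i| * Z₁ ω i ∂μ = ∫ z, ⨆ i, |x i| * z i ∂(μ.map Z₁) := by
    rw [integral_map hZ₁m.aemeasurable hS.aestronglyMeasurable]
  rw [eL, eR]
  refine integral_mono hS hF.integral_prod_left fun z => ciSup_le fun i => ?_
  have hi : ∀ i, Integrable (fun w : Fin d → ℝ => |x i| * (z i * w i)) (μ.map Z₂) := fun i =>
    ((h2 i).const_mul _).const_mul _
  have e : |x i| * z i = ∫ w : Fin d → ℝ, |x i| * (z i * w i) ∂(μ.map Z₂) := by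
    rw [integral_const_mul, integral_const_mul, m2, mul_one]
  rw [e]
  exact integral_mono (hi i) (aux_int_iSup hd _ _ hi) fun w =>
    le_ciSup (f := fun i => |x i| * (z i * w i)) (Set.finite_range _).bddAbove i



/-- The product D-norm dominates both of its factors. -/
theorem dNorm_mul_dominates {d : ℕ} (hd : 0 < d)
    {Ω : Type*} [MeasurableSpace Ω] (μ : Measure Ω) [IsProbabilityMeasure μ]
    (Z₁ Z₂ : Ω → Fin d → ℝ) (hZ₁m : Measurable Z₁) (hZ₂m : Measurable Z₂)
    (hZ₁nn : ∀ i, ∀ᵐ ω ∂μ, 0 ≤ Z₁ ω i) (hZ₂nn : ∀ i, ∀ᵐ ω ∂μ, 0 ≤ Z₂ ω i)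
    (hZ₁int : ∀ i, Integrable (fun ω => Z₁ ω i) μ)
    (hZ₂int : ∀ i, Integrable (fun ω => Z₂ ω i) μ)
    (hZ₁mean : ∀ i, ∫ ω, Z₁ ω i ∂μ = 1) (hZ₂mean : ∀ i, ∫ ω, Z₂ ω i ∂μ = 1)
    (hindep : IndepFun Z₁ Z₂ μ) :
    ∀ x : Fin d → ℝ,
      max (∫ ω, ⨆ i, |x i| * Z₁ ω i ∂μ) (∫ ω, ⨆ i, |x i| * Z₂ ω i ∂μ) ≤
        ∫ ω, ⨆ i, |x i| * (Z₁ ω i * Z₂ ω i) ∂μ := by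
  intro x
  refine max_le (aux_dom hd μ Z₁ Z₂ hZ₁m hZ₂m hZ₁int hZ₂int hZ₂mean hindep x) ?_
  have h := aux_dom hd μ Z₂ Z₁ hZ₂m hZ₁m hZ₂int hZ₁int hZ₁mean hindep.symm x
  simpa only [mul_comm (Z₁ _ _)] using h
end

section
/- Every D-norm on ℝ^d has a generator whose components sum to d: if Z = (Z_1, …, Z_d) is a generator of a D-norm ‖·‖_D, then there exist a probability space and a random vector Z' = (Z'_1, …, Z'_d) on it with Z'_i ≥ 0 almost surely, E(Z'_i) = 1 for 1 ≤ i ≤ d, Σ_{i=1}^d Z'_i = d almost surely, and E(max_{1≤i≤d} |x_i| Z'_i) = ‖x‖_D for all x ∈ ℝ^d. -/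
open MeasureTheory

/-- Every D-norm has a generator whose components sum to `d` almost surely. -/
theorem exists_generator_with_sum_d {d : ℕ} (hd : 0 < d)
    {Ω : Type*} [MeasurableSpace Ω] (μ : Measure Ω) [IsProbabilityMeasure μ]
    (Z : Ω → Fin d → ℝ) (hZm : Measurable Z)
    (hZnn : ∀ i, ∀ᵐ ω ∂μ, 0 ≤ Z ω i)
    (hZint : ∀ i, Integrable (fun ω => Z ω i) μ)
    (hZmean : ∀ i, ∫ ω, Z ω i ∂μ = 1) :
    ∃ (Ω' : Type) (_ : MeasurableSpace Ω') (ν : Measure Ω'),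
      IsProbabilityMeasure ν ∧
      ∃ Z' : Ω' → Fin d → ℝ,
        Measurable Z' ∧
        (∀ i, ∀ᵐ ω ∂ν, 0 ≤ Z' ω i) ∧
        (∀ i, Integrable (fun ω => Z' ω i) ν) ∧
        (∀ i, ∫ ω, Z' ω i ∂ν = 1) ∧
        (∀ᵐ ω ∂ν, ∑ i, Z' ω i = d) ∧
        (∀ x : Fin d → ℝ,
          (∫ ω, ⨆ i, |x i| * Z' ω i ∂ν) = ∫ ω, ⨆ i, |x i| * Z ω i ∂μ) := by
  classical
  have hd' : (0:ℝ) < d := by exact_mod_cast hd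
  haveI : Nonempty (Fin d) := ⟨⟨0, hd⟩⟩
  set ρ : Measure (Fin d → ℝ) := μ.map Z with hρ
  haveI : IsProbabilityMeasure ρ := Measure.isProbabilityMeasure_map hZm.aemeasurable
  let S : (Fin d → ℝ) → ℝ := fun z => ∑ i, z i
  have hS : Measurable S := by
    show Measurable (fun z : Fin d → ℝ => ∑ i, z i)
    fun_prop
  let w : (Fin d → ℝ) → NNReal := fun z => (S z / d).toNNReal
  have hw : Measurable w := (hS.div_const _).real_toNNReal
  let ν : Measure (Fin d → ℝ) := ρ.withDensity (fun z => (w z : ENNReal))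
  let Z' : (Fin d → ℝ) → Fin d → ℝ := fun z i => d / S z * z i
  have hZ' : Measurable Z' :=
    measurable_pi_lambda _ fun i => (measurable_const.div hS).mul (measurable_pi_apply i)
  have hnn : ∀ᵐ z ∂ρ, ∀ i, 0 ≤ z i := by
    rw [ae_all_iff]
    intro i
    rw [hρ, ae_map_iff hZm.aemeasurable (measurableSet_le measurable_const (measurable_pi_apply i))]
    exact hZnn i
  have hint : ∀ i, Integrable (fun z : Fin d → ℝ => z i) ρ := fun i =>
    (integrable_map_measure (measurable_pi_apply i).aestronglyMeasurable hZm.aemeasurable).2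
      (hZint i)
  have hmean : ∀ i, ∫ z : Fin d → ℝ, z i ∂ρ = 1 := fun i => by
    rw [hρ, integral_map hZm.aemeasurable (measurable_pi_apply i).aestronglyMeasurable]
    exact hZmean i
  have hνac : ν ≪ ρ := withDensity_absolutelyContinuous _ _
  have hpos : ∀ᵐ z ∂ν, 0 < S z := by
    have h : ∀ᵐ z ∂ν, (w z : ENNReal) ≠ 0 := by
      rw [ae_withDensity_iff hw.coe_nnreal_ennreal]
      exact Filter.Eventually.of_forall fun _ h => h
    filter_upwards [h] with z hz
    by_contra hc
    apply hz
    have : S z / d ≤ 0 := div_nonpos_of_nonpos_of_nonneg (not_lt.1 hc) hd'.le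
    simp [w, Real.toNNReal_of_nonpos this]
  have key : ∀ F : (Fin d → ℝ) → ℝ, (∀ c : ℝ, 0 ≤ c → ∀ z, F (fun i => c * z i) = c * F z) →
      (fun z => w z • F (Z' z)) =ᵐ[ρ] F := by
    intro F hF
    filter_upwards [hnn] with z hz
    have hS0 : 0 ≤ S z := Finset.sum_nonneg fun i _ => hz i
    have hw' : ((w z : NNReal) : ℝ) = S z / d := Real.coe_toNNReal _ (div_nonneg hS0 hd'.le)
    rw [NNReal.smul_def, hw', smul_eq_mul]
    have h1 : F (Z' z) = d / S z * F z := hF _ (div_nonneg hd'.le hS0) z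
    rw [h1]
    rcases hS0.eq_or_lt with h0 | h0
    · have hz0 : ∀ i, z i = 0 := fun i =>
        (Finset.sum_eq_zero_iff_of_nonneg fun i _ => hz i).1 h0.symm i (Finset.mem_univ i)
      have h2 := hF 0 le_rfl z
      have h3 : (fun i => 0 * z i) = z := by ext i; simp [hz0 i]
      rw [h3, zero_mul] at h2
      simp [h2]
    · field_simp
  have hZ'int : ∀ i, Integrable (fun z => Z' z i) ν := fun i => by
    refine (integrable_withDensity_iff_integrable_smul hw).2 ?_
    exact (hint i).congr (key (fun z => z i) (fun c _ z => rfl)).symm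
  have keyI : ∀ F : (Fin d → ℝ) → ℝ, (∀ c : ℝ, 0 ≤ c → ∀ z, F (fun i => c * z i) = c * F z) →
      ∫ z, F (Z' z) ∂ν = ∫ z, F z ∂ρ := by
    intro F hF
    rw [integral_withDensity_eq_integral_smul hw]
    exact integral_congr_ae (key F hF)
  refine ⟨Fin d → ℝ, inferInstance, ν, ⟨?_⟩, Z', hZ', ?_, hZ'int, ?_, ?_, ?_⟩
  · have hSint : Integrable (fun z => S z / d) ρ :=
      (integrable_finsetSum _ fun i _ => hint i).div_const _
    have hSnn : 0 ≤ᵐ[ρ] fun z => S z / d := by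
      filter_upwards [hnn] with z hz
      exact div_nonneg (Finset.sum_nonneg fun i _ => hz i) hd'.le
    have h1 : ∫ z, S z / d ∂ρ = 1 := by
      rw [integral_div, integral_finsetSum _ fun i _ => hint i]
      simp [hmean, hd'.ne']
    rw [withDensity_apply _ MeasurableSet.univ, Measure.restrict_univ]
    have h2 := ofReal_integral_eq_lintegral_ofReal hSint hSnn
    rw [h1, ENNReal.ofReal_one] at h2
    exact h2.symm
  · intro i
    filter_upwards [hpos, hνac.ae_le hnn] with z h1 h2
    exact mul_nonneg (div_nonneg hd'.le h1.le) (h2 i)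
  · intro i
    rw [keyI (fun z => z i) (fun c _ z => rfl), hmean]
  · filter_upwards [hpos] with z h1
    show ∑ i, d / S z * z i = d
    rw [← Finset.mul_sum]
    exact div_mul_cancel₀ _ h1.ne'
  · intro x
    rw [keyI (fun z => ⨆ i, |x i| * z i) ?_, hρ, integral_map hZm.aemeasurable]
    · exact (Measurable.iSup fun i =>
        (measurable_pi_apply i).const_mul _).aestronglyMeasurable
    · intro c hc z
      show ⨆ i, |x i| * (c * z i) = c * ⨆ i, |x i| * z i
      rw [Real.mul_iSup_of_nonneg hc]
      congr 1
      ext i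
      ring
end
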